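/- arXiv:2509.07247 — 2 statements merged into one kernel-verified Lean document; each statement's English description precedes it below -/
import Mathlib

section
/- Let A₁, ..., A_m ⊂ S^d be closed sets such that A_i ∩ (-A_i) = ∅ for all i ∈ [m] and ⋃_i A_i ∪ ⋃_i (-A_i) = S^d. Then there exist indices i₁ < i₂ < ... < i_{d+1} such that ⋂_{j=1}^{d+1} (-1)^j A_{i_j} ≠ ∅, i.e., the intersection of the sets A_{i_j} with alternating signs (-A_{i_1} ∩ A_{i_2} ∩ -A_{i_3} ∩ ...) is nonempty. (Fan's theorem) -/
open Pointwise

namespace Fan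

open Finsupp

/-- Mod 2 chains on a vertex set. -/
abbrev C (V : Type*) := Multiset V →₀ ZMod 2

noncomputable section

variable {V W : Type*}

/-- The basis chain of a simplex. -/
abbrev sg (s : Multiset V) : C V := Finsupp.single s 1

def cone (v : V) : C V →ₗ[ZMod 2] C V := Finsupp.lmapDomain (ZMod 2) (ZMod 2) (fun s => v ::ₘ s)

def push (f : V → W) : C V →ₗ[ZMod 2] C W :=
  Finsupp.lmapDomain (ZMod 2) (ZMod 2) (fun s => s.map f)

open Classical in
def bd : C V →ₗ[ZMod 2] C V :=
  Finsupp.linearCombination (ZMod 2) (fun s => (s.map fun x => sg (s.erase x)).sum)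

@[simp] lemma cone_sg (v : V) (s : Multiset V) : cone v (sg s) = sg (v ::ₘ s) := by
  simp [cone, sg, Finsupp.mapDomain_single]

@[simp] lemma push_sg (f : V → W) (s : Multiset V) : push f (sg s) = sg (s.map f) := by
  simp [push, sg, Finsupp.mapDomain_single]

open Classical in
lemma bd_sg (s : Multiset V) : bd (sg s) = (s.map fun x => sg (s.erase x)).sum := by
  simp [bd, sg]

@[simp] lemma bd_zero : bd (sg (0 : Multiset V)) = 0 := by
  simp [bd_sg]

lemma ext_lin {M : Type*} [AddCommGroup M] [Module (ZMod 2) M] {f g : C V →ₗ[ZMod 2] M}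
    (h : ∀ s, f (sg s) = g (sg s)) : f = g := by
  apply Finsupp.lhom_ext
  intro a b
  have : (Finsupp.single a b : C V) = b • sg a := by simp [sg]
  rw [this, map_smul, map_smul, h]

lemma bd_cons (v : V) (s : Multiset V) :
    bd (sg (v ::ₘ s)) = sg s + cone v (bd (sg s)) := by
  classical
  rw [bd_sg, bd_sg, Multiset.map_cons, Multiset.sum_cons, Multiset.erase_cons_head,
    map_multiset_sum, Multiset.map_map]
  congr 2
  apply Multiset.map_congr rfl
  intro x hx
  simp only [Function.comp, cone_sg]
  rw [Multiset.erase_cons_tail_of_mem hx]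

lemma bd_cone (v : V) (c : C V) : bd (cone v c) = c + cone v (bd c) := by
  have : bd ∘ₗ cone v = LinearMap.id + cone v ∘ₗ bd := by
    apply ext_lin
    intro s
    simp [bd_cons]
  exact congrArg (fun f => f c) this

lemma add_self (c : C V) : c + c = 0 := by
  ext s
  simp only [Finsupp.add_apply, Finsupp.zero_apply]
  exact CharTwo.add_self_eq_zero _

lemma bd_bd (c : C V) : bd (bd c) = 0 := by
  have : (bd ∘ₗ bd : C V →ₗ[ZMod 2] C V) = 0 := by
    apply ext_lin
    intro s
    induction s using Multiset.induction_on with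
    | empty => simp
    | cons v s ih =>
      simp only [LinearMap.comp_apply, LinearMap.zero_apply] at ih ⊢
      rw [bd_cons, map_add, bd_cone, ih, map_zero, add_zero, add_self]
  exact congrArg (fun f => f c) this

lemma push_cone (f : V → W) (v : V) (c : C V) : push f (cone v c) = cone (f v) (push f c) := by
  have : push f ∘ₗ cone v = cone (f v) ∘ₗ push f := by
    apply ext_lin
    intro s
    simp
  exact congrArg (fun f => f c) this

lemma push_bd (f : V → W) (c : C V) : push f (bd c) = bd (push f c) := by
  have : push f ∘ₗ bd = bd ∘ₗ push f := by
    apply ext_lin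
    intro s
    induction s using Multiset.induction_on with
    | empty => simp
    | cons v s ih =>
      simp only [LinearMap.comp_apply, push_sg] at ih ⊢
      rw [bd_cons, map_add, push_cone, ih, Multiset.map_cons, bd_cons, push_sg]
  exact congrArg (fun f => f c) this

lemma push_push {U : Type*} (f : V → W) (g : W → U) (c : C V) :
    push g (push f c) = push (fun x => g (f x)) c := by
  have : push g ∘ₗ push f = push (fun x => g (f x)) := by
    apply ext_lin
    intro s
    simp
  exact congrArg (fun f => f c) this

lemma push_id (c : C V) : push (fun x => x) c = c := by
  have : push (fun x : V => x) = LinearMap.id := by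
    apply ext_lin
    intro s
    simp
  exact congrArg (fun f => f c) this

/-- Chains supported on simplices with property `P`. -/
def S (P : Multiset V → Prop) : Submodule (ZMod 2) (C V) :=
  Submodule.span (ZMod 2) (sg '' {s | P s})

lemma sg_mem {P : Multiset V → Prop} {s : Multiset V} (h : P s) : sg s ∈ S P :=
  Submodule.subset_span ⟨s, h, rfl⟩

lemma map_S {P : Multiset V → Prop} {Q : Multiset W → Prop} (f : C V →ₗ[ZMod 2] C W)
    (h : ∀ s, P s → f (sg s) ∈ S Q) {c : C V} (hc : c ∈ S P) : f c ∈ S Q := by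
  have : S P ≤ (S Q).comap f := by
    apply Submodule.span_le.2
    rintro _ ⟨s, hs, rfl⟩
    exact h s hs
  exact this hc

lemma S_mono {P Q : Multiset V → Prop} (h : ∀ s, P s → Q s) : S P ≤ S Q := by
  apply Submodule.span_mono
  exact Set.image_mono h

lemma eq_on_S {M : Type*} [AddCommGroup M] [Module (ZMod 2) M] {P : Multiset V → Prop}
    {f g : C V →ₗ[ZMod 2] M} (h : ∀ s, P s → f (sg s) = g (sg s)) {c : C V} (hc : c ∈ S P) :
    f c = g c := by
  have : S P ≤ LinearMap.eqLocus f g := by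
    apply Submodule.span_le.2
    rintro _ ⟨s, hs, rfl⟩
    exact h s hs
  exact this hc

open Classical in
lemma bd_mem (s : Multiset V) : bd (sg s) ∈ S (fun u => ∃ x ∈ s, u = s.erase x) := by
  rw [bd_sg]
  apply multiset_sum_mem
  intro c hc
  obtain ⟨x, hx, rfl⟩ := Multiset.mem_map.1 hc
  exact sg_mem ⟨x, hx, rfl⟩

/-! ### Combinatorial part -/

variable {m : ℕ}

/-- Alternating lists of labels starting with sign `s`. -/
def Alt : Bool → List (Fin m × Bool) → Prop
  | _, [] => True
  | s, x :: l => x.2 = s ∧ (∀ y ∈ l, x.1 < y.1) ∧ Alt (!s) l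

def AltM (s : Bool) (t : Multiset (Fin m × Bool)) : Prop :=
  ∃ l : List (Fin m × Bool), (l : Multiset (Fin m × Bool)) = t ∧ Alt s l

open Classical in
def ind (p : Prop) : ZMod 2 := if p then 1 else 0

lemma ind_pos {p : Prop} (h : p) : ind p = 1 := by simp [ind, h]

lemma ind_neg {p : Prop} (h : ¬ p) : ind p = 0 := by simp [ind, h]

def Phi (s : Bool) : C (Fin m × Bool) →ₗ[ZMod 2] ZMod 2 :=
  Finsupp.linearCombination (ZMod 2) (fun t => ind (AltM s t))

lemma Phi_sg (s : Bool) (t : Multiset (Fin m × Bool)) :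
    Phi s (sg t) = ind (AltM s t) := by
  simp [Phi, sg]

lemma AltM_zero (s : Bool) : AltM s (0 : Multiset (Fin m × Bool)) := ⟨[], rfl, trivial⟩

lemma AltM_cons {s : Bool} {x : Fin m × Bool} {u : Multiset (Fin m × Bool)}
    (hx : ∀ y ∈ u, x.1 < y.1) : AltM s (x ::ₘ u) ↔ x.2 = s ∧ AltM (!s) u := by
  constructor
  · rintro ⟨l, hl, ha⟩
    cases l with
    | nil => exact absurd hl.symm (Multiset.cons_ne_zero)
    | cons y l =>
      obtain ⟨h1, h2, h3⟩ := ha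
      have hxy : x = y := by
        by_contra hne
        have hx1 : x ∈ l := by
          have : x ∈ ((y :: l : List _) : Multiset (Fin m × Bool)) := by rw [hl]; simp
          simpa [hne] using this
        have hy1 : y ∈ u := by
          have : y ∈ x ::ₘ u := by rw [← hl]; simp
          simpa [Ne.symm hne] using this
        exact lt_asymm (h2 x hx1) (hx y hy1)
      subst hxy
      refine ⟨h1, l, ?_, h3⟩
      rw [← Multiset.cons_coe] at hl
      exact (Multiset.cons_inj_right x).1 hl
  · rintro ⟨h1, l, rfl, h3⟩
    exact ⟨x :: l, rfl, h1, fun y hy => hx y (by simpa using hy), h3⟩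

lemma Alt_nodup {s : Bool} {l : List (Fin m × Bool)} (h : Alt s l) : l.Nodup := by
  induction l generalizing s with
  | nil => simp
  | cons x l ih =>
    obtain ⟨_, h2, h3⟩ := h
    exact List.nodup_cons.2 ⟨fun hx => lt_irrefl _ (h2 x hx), ih h3⟩

lemma not_AltM {s : Bool} {x : Fin m × Bool} {u : Multiset (Fin m × Bool)} :
    ¬ AltM s (x ::ₘ x ::ₘ u) := by
  rintro ⟨l, hl, ha⟩
  have := Multiset.coe_nodup.2 (Alt_nodup ha)
  rw [hl] at this
  simp at this

lemma key_list (l : List (Fin m × Bool)) (hl : l.Pairwise (fun a b => a.1 < b.1 ∨ a = b)) :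
    ∀ s, Phi s (bd (sg (l : Multiset (Fin m × Bool)))) =
      Phi s (sg (l : Multiset (Fin m × Bool))) + Phi (!s) (sg (l : Multiset (Fin m × Bool))) := by
  classical
  induction l with
  | nil =>
    intro s
    rw [Multiset.coe_nil, bd_zero, map_zero, Phi_sg, Phi_sg, ind_pos (AltM_zero _),
      ind_pos (AltM_zero _)]
    exact (CharTwo.add_self_eq_zero _).symm
  | cons x l ih =>
    intro s
    obtain ⟨h1, h2⟩ := List.pairwise_cons.1 hl
    rw [← Multiset.cons_coe]
    by_cases hx : x ∈ l
    · obtain ⟨w, hw⟩ := Multiset.exists_cons_of_mem (Multiset.mem_coe.2 hx)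
      rw [hw]
      have hz : ∀ c s, Phi s (cone x (cone x c)) = 0 := by
        intro c s
        have : Phi s ∘ₗ cone x ∘ₗ cone x = 0 := by
          apply ext_lin
          intro t
          simp only [LinearMap.comp_apply, cone_sg, LinearMap.zero_apply]
          rw [Phi_sg, ind_neg not_AltM]
        exact congrArg (fun f => f c) this
      rw [bd_cons, bd_cons, map_add, map_add, map_add, cone_sg, hz, Phi_sg s (x ::ₘ x ::ₘ w),
        Phi_sg (!s) (x ::ₘ x ::ₘ w), ind_neg not_AltM, ind_neg not_AltM, add_zero, add_zero]
      exact CharTwo.add_self_eq_zero _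
    · have hlt : ∀ y ∈ l, x.1 < y.1 := by
        intro y hy
        rcases h1 y hy with h | h
        · exact h
        · exact absurd (h ▸ hy) hx
      have hc : ∀ c ∈ S (fun u => ∃ y ∈ (l : Multiset (Fin m × Bool)), u = (l : Multiset _).erase y),
          (Phi s ∘ₗ cone x) c = ((ind (x.2 = s)) • Phi (!s)) c := by
        intro c hc
        refine eq_on_S ?_ hc
        rintro u ⟨y, hy, rfl⟩
        have hu : ∀ z ∈ (l : Multiset (Fin m × Bool)).erase y, x.1 < z.1 := fun z hz =>
          hlt z (Multiset.mem_coe.1 (Multiset.mem_of_mem_erase hz))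
        simp only [LinearMap.comp_apply, cone_sg, LinearMap.smul_apply, Phi_sg, AltM_cons hu]
        by_cases h : x.2 = s
        · rw [ind_pos h]; simp [h]
        · rw [ind_neg h, ind_neg (fun hh => h hh.1)]; simp
      have hc' := hc _ (by convert bd_mem _)
      rw [LinearMap.comp_apply] at hc'
      have hlt' : ∀ y ∈ (l : Multiset (Fin m × Bool)), x.1 < y.1 := fun y hy => hlt y hy
      rw [bd_cons, map_add, hc', LinearMap.smul_apply, ih h2, Phi_sg s (x ::ₘ _),
        Phi_sg (!s) (x ::ₘ _), AltM_cons hlt', AltM_cons hlt', Bool.not_not, Phi_sg s, Phi_sg]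
      have e2 : (1 : ZMod 2) + 1 = 0 := rfl
      have hb : x.2 = s ∨ x.2 = !s := by cases x.2 <;> cases s <;> simp
      rcases hb with h | h
      · have h' : ¬ x.2 = !s := by rw [h]; cases s <;> simp
        simp only [h, true_and]
        by_cases p : AltM s (l : Multiset (Fin m × Bool)) <;>
        by_cases q : AltM (!s) (l : Multiset (Fin m × Bool)) <;> simp [p, q, e2, ind]
      · have h' : ¬ x.2 = s := by rw [h]; cases s <;> simp
        simp only [h, true_and]
        by_cases p : AltM s (l : Multiset (Fin m × Bool)) <;> simp [p, ind]

/-- Complementary-free multisets of labels. -/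
def CF (t : Multiset (Fin m × Bool)) : Prop := ∀ x ∈ t, ∀ y ∈ t, x.1 = y.1 → x = y

lemma key (t : Multiset (Fin m × Bool)) (ht : CF t) (s : Bool) :
    Phi s (bd (sg t)) = Phi s (sg t) + Phi (!s) (sg t) := by
  classical
  let r : Fin m × Bool → Fin m × Bool → Prop := fun a b => a.1 ≤ b.1
  have : Std.Total r := ⟨fun a b => le_total _ _⟩
  have : IsTrans _ r := ⟨fun a b c h h' => le_trans h h'⟩
  have hp : (t.toList.insertionSort r).Perm t.toList := List.perm_insertionSort r _
  have hs : (t.toList.insertionSort r).Pairwise r := List.pairwise_insertionSort r _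
  have he : ((t.toList.insertionSort r : List _) : Multiset (Fin m × Bool)) = t := by
    rw [Multiset.coe_eq_coe.2 hp, Multiset.coe_toList]
  have := key_list (t.toList.insertionSort r) (by
    refine hs.imp_of_mem ?_ 
    intro a b ha hb hab
    rcases lt_or_eq_of_le hab with h | h
    · exact Or.inl h
    · exact Or.inr (ht a (by rw [← he]; exact ha) b (by rw [← he]; exact hb) h)) s
  rwa [he] at this

def flip (x : Fin m × Bool) : Fin m × Bool := (x.1, !x.2)

lemma flip_flip (x : Fin m × Bool) : flip (flip x) = x := by simp [flip]

lemma Alt_flip {s : Bool} {l : List (Fin m × Bool)} (h : Alt s l) : Alt (!s) (l.map flip) := by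
  induction l generalizing s with
  | nil => trivial
  | cons x l ih =>
    obtain ⟨h1, h2, h3⟩ := h
    refine ⟨by simp [flip, h1], ?_, ih h3⟩
    intro y hy
    obtain ⟨z, hz, rfl⟩ := List.mem_map.1 hy
    exact h2 z hz

lemma AltM_flip' {s : Bool} {t : Multiset (Fin m × Bool)} (h : AltM s t) :
    AltM (!s) (t.map flip) := by
  obtain ⟨l, rfl, h⟩ := h
  exact ⟨_, by simp, Alt_flip h⟩

lemma AltM_flip {s : Bool} {t : Multiset (Fin m × Bool)} :
    AltM s (t.map flip) ↔ AltM (!s) t := by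
  constructor
  · intro h
    have := AltM_flip' h
    simpa [Multiset.map_map, Function.comp_def, flip_flip] using this
  · intro h
    simpa using AltM_flip' h

lemma Phi_flip (s : Bool) (c : C (Fin m × Bool)) : Phi s (push flip c) = Phi (!s) c := by
  have : Phi s ∘ₗ push flip = Phi (m := m) (!s) := by
    apply ext_lin
    intro t
    simp only [LinearMap.comp_apply, push_sg, Phi_sg, AltM_flip]
  exact congrArg (fun f => f c) this

/-- Combinatorial Fan lemma for chains. -/
lemma fan_comb (c : ℕ → C (Fin m × Bool)) (n : ℕ) (P : Multiset (Fin m × Bool) → Prop)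
    (hP : ∀ t, P t → CF t) (hc : ∀ k ≤ n, c k ∈ S P) (h0 : bd (c 0) = sg 0)
    (hbd : ∀ k < n, bd (c (k + 1)) = c k + push flip (c k)) :
    ∀ k ≤ n, Phi true (c k) + Phi false (c k) = 1 := by
  have hk : ∀ c ∈ S P, Phi true (bd c) = Phi true c + Phi false c := by
    intro c hc
    exact eq_on_S (f := Phi true ∘ₗ bd) (g := Phi true + Phi false)
      (fun s hs => key s (hP s hs) true) hc
  intro k
  induction k with
  | zero =>
    intro h
    rw [← hk _ (hc 0 h), h0, Phi_sg, ind_pos (AltM_zero _)]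
  | succ k ih =>
    intro h
    rw [← hk _ (hc _ h), hbd k (by omega), map_add, Phi_flip]
    exact ih (by omega)

lemma exists_alt {c : C (Fin m × Bool)} {P : Multiset (Fin m × Bool) → Prop} (hc : c ∈ S P)
    (h : Phi true c + Phi false c = 1) : ∃ t s, P t ∧ AltM s t := by
  by_contra hcon
  push Not at hcon
  have := eq_on_S (f := Phi true + Phi false) (g := 0) (fun t ht => by
    simp [Phi_sg, hcon t _ ht, ind]) hc
  rw [LinearMap.add_apply, h] at this
  simp at this

/-! ### Subdivision -/

section Geom



variable {E : Type*} [NormedAddCommGroup E] [NormedSpace ℝ E]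

def bary (s : Multiset E) : E := (s.card : ℝ)⁻¹ • s.sum

def neg' (x : E) : E := -x

lemma bary_neg (s : Multiset E) : bary (s.map neg') = - bary s := by
  have : (s.map neg').sum = - s.sum := by
    induction s using Multiset.induction_on with
    | empty => simp
    | cons v s ih => simp [ih, neg']; abel
  simp [bary, this]

def Sd : ℕ → C E →ₗ[ZMod 2] C E
  | 0 => LinearMap.id
  | n + 1 => Finsupp.linearCombination (ZMod 2) (fun s => cone (bary s) (Sd n (bd (sg s))))

lemma Sd_succ (n : ℕ) (s : Multiset E) : Sd (n + 1) (sg s) = cone (bary s) (Sd n (bd (sg s))) := by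
  simp [Sd, sg]

lemma bd_Sd (n : ℕ) (c : C E) : bd (Sd (n + 1) c) = Sd n (bd c) := by
  induction n generalizing c with
  | zero =>
    have : bd ∘ₗ Sd (E := E) 1 = Sd 0 ∘ₗ bd := by
      apply ext_lin
      intro s
      simp only [LinearMap.comp_apply]
      rw [Sd_succ, bd_cone]
      simp [Sd, bd_bd]
    exact congrArg (fun f => f c) this
  | succ n ih =>
    have : bd ∘ₗ Sd (E := E) (n + 2) = Sd (n + 1) ∘ₗ bd := by
      apply ext_lin
      intro s
      simp only [LinearMap.comp_apply]
      rw [Sd_succ, bd_cone, ih, bd_bd, map_zero, map_zero, add_zero]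
    exact congrArg (fun f => f c) this

lemma Sd_neg (n : ℕ) (c : C E) : Sd n (push neg' c) = push neg' (Sd n c) := by
  induction n generalizing c with
  | zero => rfl
  | succ n ih =>
    have : Sd (n + 1) ∘ₗ push (neg' (E := E)) = push neg' ∘ₗ Sd (n + 1) := by
      apply ext_lin
      intro s
      simp only [LinearMap.comp_apply]
      rw [push_sg, Sd_succ, Sd_succ, ← push_sg, ← push_bd, ih, push_cone, bary_neg]
      rfl
    exact congrArg (fun f => f c) this

lemma bary_mem {F : Set E} (hF : Convex ℝ F) (s : Multiset E) (h0 : s ≠ 0)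
    (hs : ∀ x ∈ s, x ∈ F) : bary s ∈ F := by
  induction s using Quotient.inductionOn with
  | h l =>
    have hl : l ≠ [] := by
      rintro rfl
      exact h0 rfl
    have hpos : 0 < (l.length : ℝ) := by
      exact_mod_cast List.length_pos_iff.2 hl
    have hsum : (l.sum : E) = ∑ i : Fin l.length, l.get i := by
      simp
    have : bary (Quotient.mk _ l : Multiset E) =
        ∑ i : Fin l.length, (l.length : ℝ)⁻¹ • l.get i := by
      rw [← Finset.smul_sum, ← hsum]
      simp [bary]
    rw [this]
    apply hF.sum_mem
    · intro i _
      positivity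
    · simp [hpos.ne']
    · intro i _
      apply hs
      simp

lemma sum_sub_le (u : Multiset E) (v : E) (δ : ℝ) (h : ∀ w ∈ u, dist w v ≤ δ) :
    ‖u.sum - (u.card : ℝ) • v‖ ≤ u.card * δ := by
  induction u using Multiset.induction_on with
  | empty => simp
  | cons w u ih =>
    have h1 := ih (fun x hx => h x (by simp [hx]))
    have h2 := h w (by simp)
    rw [dist_eq_norm] at h2
    have : (w ::ₘ u).sum - ((w ::ₘ u).card : ℝ) • v = (w - v) + (u.sum - (u.card : ℝ) • v) := by
      simp only [Multiset.sum_cons, Multiset.card_cons, Nat.cast_add, Nat.cast_one, add_smul,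
        one_smul]
      abel
    rw [this]
    refine (norm_add_le _ _).trans ?_
    push_cast [Multiset.card_cons]
    linarith

lemma dist_bary (s : Multiset E) (v : E) (hv : v ∈ s) (δ : ℝ)
    (h : ∀ x ∈ s, ∀ y ∈ s, dist x y ≤ δ) :
    dist v (bary s) ≤ (1 - 1 / (s.card : ℝ)) * δ := by
  obtain ⟨u, rfl⟩ := Multiset.exists_cons_of_mem hv
  have h1 := sum_sub_le u v δ (fun w hw => h w (by simp [hw]) v (by simp))
  have hp : (0 : ℝ) < (u.card : ℝ) + 1 := by positivity
  have h2 : bary (v ::ₘ u) - v = ((u.card : ℝ) + 1)⁻¹ • (u.sum - (u.card : ℝ) • v) := by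
    have : v = ((u.card : ℝ) + 1)⁻¹ • (((u.card : ℝ) + 1) • v) := by
      rw [smul_smul, inv_mul_cancel₀ hp.ne', one_smul]
    rw [bary, Multiset.card_cons, Multiset.sum_cons]
    push_cast
    nth_rewrite 2 [this]
    rw [← smul_sub]
    congr 1
    rw [add_smul, one_smul]
    abel
  rw [dist_comm, dist_eq_norm, h2, norm_smul, Multiset.card_cons]
  push_cast
  rw [Real.norm_of_nonneg (by positivity)]
  calc ((u.card : ℝ) + 1)⁻¹ * ‖u.sum - (u.card : ℝ) • v‖
      ≤ ((u.card : ℝ) + 1)⁻¹ * (u.card * δ) := by gcongr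
    _ = (1 - 1 / ((u.card : ℝ) + 1)) * δ := by field_simp; ring

lemma Sd_mem (N : ℕ) (δ : ℝ) (hδ : 0 ≤ δ) (n : ℕ) (hn : n ≤ N) (s : Multiset E) (hs : s.card = n)
    (hd : ∀ x ∈ s, ∀ y ∈ s, dist x y ≤ δ) :
    Sd n (sg s) ∈ S (fun t => t.card = n ∧
      (∀ x ∈ t, ∀ y ∈ t, dist x y ≤ (1 - 1 / (N : ℝ)) * δ) ∧
      ∀ x ∈ t, x ∈ convexHull ℝ {x | x ∈ s}) := by
  classical
  induction n generalizing s with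
  | zero =>
    obtain rfl := Multiset.card_eq_zero.1 hs
    exact sg_mem (by simp)
  | succ n ih =>
    rw [Sd_succ]
    have h1 : Sd n (bd (sg s)) ∈ S (fun t => t.card = n ∧
      (∀ x ∈ t, ∀ y ∈ t, dist x y ≤ (1 - 1 / (N : ℝ)) * δ) ∧
      ∀ x ∈ t, x ∈ convexHull ℝ {x | x ∈ s}) := by
      refine map_S (Sd n) ?_ (bd_mem s)
      rintro u ⟨x, hx, rfl⟩
      have hsub : ∀ y ∈ s.erase x, y ∈ s := fun y hy => Multiset.mem_of_mem_erase hy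
      have := ih (by omega) (s.erase x) (by rw [Multiset.card_erase_of_mem hx, hs]; rfl)
        (fun a ha b hb => hd a (hsub a ha) b (hsub b hb))
      refine S_mono ?_ this
      rintro t ⟨a, b, c⟩
      exact ⟨a, b, fun y hy => convexHull_mono hsub (c y hy)⟩
    refine map_S (cone (bary s)) ?_ h1
    rintro t ⟨hc, hdt, hh⟩
    rw [cone_sg]
    have hN : (0 : ℝ) < (n + 1 : ℕ) := by positivity
    have hN' : ((n + 1 : ℕ) : ℝ) ≤ N := by exact_mod_cast hn
    have hrr : (1 - 1 / ((n + 1 : ℕ) : ℝ)) * δ ≤ (1 - 1 / (N : ℝ)) * δ := by gcongr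
    have hrn : 0 ≤ (1 - 1 / (N : ℝ)) * δ := by
      apply mul_nonneg _ hδ
      rw [sub_nonneg, div_le_one (by linarith)]
      refine le_trans ?_ hN'
      push_cast
      linarith [(Nat.cast_nonneg n : (0 : ℝ) ≤ n)]
    have hball : convexHull ℝ {x | x ∈ s} ⊆ Metric.closedBall (bary s) ((1 - 1 / (N : ℝ)) * δ) := by
      apply convexHull_min _ (convex_closedBall _ _)
      intro v hv
      refine (dist_bary s v hv δ hd).trans ?_
      rw [hs]
      exact hrr
    apply sg_mem
    refine ⟨by simp [hc], ?_, ?_⟩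
    · intro x hx y hy
      rcases Multiset.mem_cons.1 hx with rfl | hx
      · rcases Multiset.mem_cons.1 hy with rfl | hy
        · simpa using hrn
        · rw [dist_comm]
          exact hball (hh y hy)
      · rcases Multiset.mem_cons.1 hy with rfl | hy
        · exact hball (hh x hx)
        · exact hdt x hx y hy
    · intro x hx
      rcases Multiset.mem_cons.1 hx with rfl | hx
      · apply bary_mem (convex_convexHull ℝ _)
        · rintro rfl
          simp at hs
        · exact fun x hx => subset_convexHull ℝ _ hx
      · exact hh x hx

/-- The basic chains of the cross-polytope. -/
def cc (e : ℕ → E) : ℕ → C E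
  | 0 => sg {e 0}
  | k + 1 => cone (e (k + 1)) (cc e k + push neg' (cc e k))

lemma neg_neg' (c : C E) : push neg' (push neg' c) = c := by
  rw [push_push]
  convert push_id c using 3
  simp [neg']

lemma bd_cc_zero (e : ℕ → E) : bd (cc e 0) = sg 0 := by
  have : cc e 0 = sg (e 0 ::ₘ 0) := rfl
  rw [this, bd_cons]
  simp

lemma cc_succ (e : ℕ → E) (k : ℕ) :
    cc e (k + 1) = cone (e (k + 1)) (cc e k + push neg' (cc e k)) := rfl

lemma bd_cc (e : ℕ → E) (k : ℕ) : bd (cc e (k + 1)) = cc e k + push neg' (cc e k) := by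
  induction k with
  | zero =>
    rw [cc_succ, bd_cone, map_add, ← push_bd, bd_cc_zero, push_sg, Multiset.map_zero, add_self, map_zero,
      add_zero]
  | succ k ih =>
    rw [cc_succ, bd_cone, map_add bd, ← push_bd, ih, map_add (push neg') (cc e k), neg_neg', add_comm (push neg' (cc e k)),
      add_self, map_zero, add_zero]

def sub (e : ℕ → E) (j k : ℕ) : C E := (Sd (k + 1))^[j] (cc e k)

lemma sub_succ (e : ℕ → E) (j k : ℕ) : sub e (j + 1) k = Sd (k + 1) (sub e j k) := by
  simp [sub, Function.iterate_succ_apply']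

lemma bd_sub_zero (e : ℕ → E) (j : ℕ) : bd (sub e j 0) = sg 0 := by
  induction j with
  | zero => exact bd_cc_zero e
  | succ j ih => rw [sub_succ, bd_Sd, ih]; rfl

lemma bd_sub (e : ℕ → E) (j k : ℕ) : bd (sub e j (k + 1)) = sub e j k + push neg' (sub e j k) := by
  induction j with
  | zero => exact bd_cc e k
  | succ j ih => rw [sub_succ, bd_Sd, ih, map_add, Sd_neg, ← sub_succ]

/-- Simplices with `n` vertices, mesh at most `δ`, inside a member of the family `G`. -/
def Fine (G : Set (Set E)) (δ : ℝ) (n : ℕ) (s : Multiset E) : Prop :=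
  s.card = n ∧ (∀ x ∈ s, ∀ y ∈ s, dist x y ≤ δ) ∧ ∃ F ∈ G, ∀ x ∈ s, x ∈ F

lemma sub_fine (G : Set (Set E)) (hG : ∀ F ∈ G, Convex ℝ F) (e : ℕ → E) (d : ℕ) (D : ℝ)
    (hD : 0 ≤ D) (hcc : ∀ k ≤ d, cc e k ∈ S (Fine G D (k + 1))) (j k : ℕ) (hk : k ≤ d) :
    sub e j k ∈ S (Fine G ((1 - 1 / ((d + 1 : ℕ) : ℝ)) ^ j * D) (k + 1)) := by
  have hr : 0 ≤ 1 - 1 / ((d + 1 : ℕ) : ℝ) := by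
    rw [sub_nonneg, div_le_one (by positivity)]
    push_cast
    linarith [(Nat.cast_nonneg d : (0 : ℝ) ≤ d)]
  induction j with
  | zero => simpa [sub] using hcc k hk
  | succ j ih =>
    rw [sub_succ]
    refine map_S _ ?_ ih
    rintro s ⟨h1, h2, F, hF, h3⟩
    have := Sd_mem (d + 1) _ (by positivity) (k + 1) (by omega) s h1 h2
    refine S_mono ?_ this
    rintro t ⟨a, b, c⟩
    refine ⟨a, ?_, F, hF, fun x hx => convexHull_min h3 (hG F hF) (c x hx)⟩
    intro x hx y hy
    refine (b x hx y hy).trans (le_of_eq ?_)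
    ring

open Filter Topology in
lemma lebesgue {J : Type*} [Nonempty J] {K : Set E} (hK : IsCompact K)
    (G : J → Set E) (hG : ∀ j, IsClosed (G j)) (hGK : ∀ j, G j ⊆ K) (h : ⋂ j, G j = ∅) :
    ∀ᶠ δ in 𝓝[>] (0 : ℝ), ∀ x : J → E, (∀ j, x j ∈ G j) → (∀ i j, dist (x i) (x j) ≤ δ) →
      False := by
  obtain ⟨δ, hδ, H⟩ := lebesgue_number_lemma_of_metric (c := fun j => (G j)ᶜ) hK
    (fun j => (hG j).isOpen_compl) (by
      rw [← Set.compl_iInter, h]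
      simp)
  filter_upwards [Ioo_mem_nhdsGT hδ] with η hη x hx hd
  let j0 := Classical.arbitrary J
  obtain ⟨i, hi⟩ := H (x j0) (hGK _ (hx j0))
  exact hi (Metric.mem_ball.2 ((hd i j0).trans_lt hη.2)) (hx i)

lemma Alt_sorted {s : Bool} {l : List (Fin m × Bool)} (h : Alt s l) :
    l.Pairwise (fun a b => a.1 < b.1) := by
  induction l generalizing s with
  | nil => simp
  | cons x l ih =>
    obtain ⟨_, h2, h3⟩ := h
    exact List.pairwise_cons.2 ⟨h2, ih h3⟩

lemma Alt_get {s : Bool} {l : List (Fin m × Bool)} (h : Alt s l) (j : ℕ) (hj : j < l.length) :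
    (l[j]).2 = if j % 2 = 0 then s else !s := by
  induction l generalizing s j with
  | nil => simp at hj
  | cons x l ih =>
    obtain ⟨h1, h2, h3⟩ := h
    cases j with
    | zero => simpa using h1
    | succ j =>
      have := ih h3 j (by simpa using hj)
      simp only [List.getElem_cons_succ, this]
      rcases Nat.mod_two_eq_zero_or_one j with h | h
      · have h' : (j + 1) % 2 = 1 := by omega
        simp [h, h']
      · have h' : (j + 1) % 2 = 0 := by omega
        simp [h, h']

lemma exists_lab {K : Set E} (B : Fin m → Set E) (hdisj : ∀ i, B i ∩ -B i = ∅)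
    (hcov : K ⊆ ⋃ i, (B i ∪ -B i)) (hne : K.Nonempty) :
    ∃ lab : E → Fin m × Bool, ∀ x ∈ K,
      (if (lab x).2 then x ∈ B (lab x).1 else -x ∈ B (lab x).1) ∧ lab (-x) = flip (lab x) := by
  classical
  obtain ⟨x0, hx0⟩ := hne
  obtain ⟨i0, -⟩ := Set.mem_iUnion.1 (hcov hx0)
  let g : Set (Fin m) → Fin m := fun T => if h : T.Nonempty then h.some else i0
  let T : E → Set (Fin m) := fun x => {i | x ∈ B i ∨ -x ∈ B i}
  have hT : ∀ x, T (-x) = T x := by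
    intro x
    ext i
    simp [T, or_comm]
  refine ⟨fun x => (g (T x), decide (x ∈ B (g (T x)))), ?_⟩
  intro x hx
  have hTx : (T x).Nonempty := by
    obtain ⟨i, hi⟩ := Set.mem_iUnion.1 (hcov hx)
    exact ⟨i, by simpa [T] using hi⟩
  have hgm : g (T x) ∈ T x := by
    simp only [g, dif_pos hTx]
    exact hTx.some_mem
  have hnot : ¬ (x ∈ B (g (T x)) ∧ -x ∈ B (g (T x))) := by
    rintro ⟨h1, h2⟩
    have : x ∈ B (g (T x)) ∩ -B (g (T x)) := ⟨h1, by simpa using h2⟩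
    rw [hdisj] at this
    exact this
  have hgm' : x ∈ B (g (T x)) ∨ -x ∈ B (g (T x)) := hgm
  simp only [hT, flip]
  by_cases h1 : x ∈ B (g (T x))
  · have h2 : -x ∉ B (g (T x)) := fun h2 => hnot ⟨h1, h2⟩
    simp [h1, h2]
  · have h2 : -x ∈ B (g (T x)) := hgm'.resolve_left h1
    simp [h1, h2]

open Filter Topology in
lemma fan_abs (d : ℕ) {K : Set E} (hK : IsCompact K) (G : Set (Set E))
    (hG : ∀ F ∈ G, Convex ℝ F) (hGK : ∀ F ∈ G, F ⊆ K) (e : ℕ → E)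
    (he : e 0 ∈ K)
    (hcc : ∀ k ≤ d, cc e k ∈ S (fun s => s.card = k + 1 ∧ ∃ F ∈ G, ∀ x ∈ s, x ∈ F))
    (B : Fin m → Set E) (hB : ∀ i, IsClosed (B i)) (hBK : ∀ i, B i ⊆ K)
    (hKneg : ∀ x ∈ K, -x ∈ K)
    (hdisj : ∀ i, B i ∩ -B i = ∅) (hcov : K ⊆ ⋃ i, (B i ∪ -B i)) :
    ∃ ι : Fin (d + 1) → Fin m, StrictMono ι ∧
      (⋂ j : Fin (d + 1), (if (j : ℕ) % 2 = 0 then -B (ι j) else B (ι j))).Nonempty := by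
  classical
  by_contra hcon
  have hBn : ∀ i, IsClosed (-B i) := fun i => (hB i).neg
  have hBnK : ∀ i, -B i ⊆ K := fun i x hx => by simpa using hKneg _ (hBK i hx)
  have hev1 : ∀ ι : Fin (d + 1) → Fin m, ∀ᶠ δ in 𝓝[>] (0 : ℝ), StrictMono ι →
      ∀ x : Fin (d + 1) → E,
        (∀ j : Fin (d + 1), x j ∈ (if (j : ℕ) % 2 = 0 then -B (ι j) else B (ι j))) →
        (∀ i j, dist (x i) (x j) ≤ δ) → False := by
    intro ι
    by_cases hι : StrictMono ι
    · have := lebesgue hK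
        (fun j : Fin (d + 1) => if (j : ℕ) % 2 = 0 then -B (ι j) else B (ι j))
        (fun j => by split_ifs; exacts [hBn _, hB _])
        (fun j => by split_ifs; exacts [hBnK _, hBK _])
        (Set.not_nonempty_iff_eq_empty.1 fun h => hcon ⟨ι, hι, h⟩)
      filter_upwards [this] with δ h _
      exact h
    · exact Eventually.of_forall fun δ h => absurd h hι
  have hev2 : ∀ i : Fin m, ∀ᶠ δ in 𝓝[>] (0 : ℝ), ∀ x y : E, x ∈ B i → -y ∈ B i →
      dist x y ≤ δ → False := by
    intro i
    have := lebesgue hK (fun b : Bool => if b then B i else -B i)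
      (fun b => by cases b; exacts [hBn i, hB i])
      (fun b => by cases b; exacts [hBnK i, hBK i])
      (by
        rw [← hdisj i]
        ext x
        simp [Set.mem_iInter, and_comm])
    filter_upwards [this, self_mem_nhdsWithin] with δ h hδ x y hx hy hxy
    have hδ' : (0 : ℝ) ≤ δ := le_of_lt hδ
    refine h (fun b => if b then x else y) ?_ ?_
    · intro b
      cases b
      · simpa using hy
      · simpa using hx
    · intro a b
      cases a <;> cases b <;> simp [hδ', hxy, dist_comm y x]
  obtain ⟨δ, ⟨hδ1, hδ2⟩, hδ0⟩ :=
    (((eventually_all.2 hev1).and (eventually_all.2 hev2)).and self_mem_nhdsWithin).exists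
  have hδ0' : (0 : ℝ) < δ := hδ0
  have hcc' : ∀ k ≤ d, cc e k ∈ S (Fine G (Metric.diam K) (k + 1)) := by
    intro k hk
    refine S_mono ?_ (hcc k hk)
    rintro s ⟨h1, F, hF, h2⟩
    exact ⟨h1, fun x hx y hy => Metric.dist_le_diam_of_mem hK.isBounded (hGK F hF (h2 x hx))
      (hGK F hF (h2 y hy)), F, hF, h2⟩
  obtain ⟨j, hj⟩ : ∃ j : ℕ, (1 - 1 / ((d + 1 : ℕ) : ℝ)) ^ j * Metric.diam K ≤ δ := by
    have hr : 0 ≤ 1 - 1 / ((d + 1 : ℕ) : ℝ) := by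
      rw [sub_nonneg, div_le_one (by positivity)]
      push_cast
      linarith [(Nat.cast_nonneg d : (0 : ℝ) ≤ d)]
    have hr1 : 1 - 1 / ((d + 1 : ℕ) : ℝ) < 1 := by
      have : (0 : ℝ) < 1 / ((d + 1 : ℕ) : ℝ) := by positivity
      linarith
    have ht := (tendsto_pow_atTop_nhds_zero_of_lt_one hr hr1).mul_const (Metric.diam K)
    rw [zero_mul] at ht
    obtain ⟨j, hj⟩ := (ht.eventually (gt_mem_nhds hδ0')).exists
    exact ⟨j, hj.le⟩
  have hfine : ∀ k ≤ d, sub e j k ∈ S (Fine G δ (k + 1)) := by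
    intro k hk
    refine S_mono ?_ (sub_fine G hG e d _ Metric.diam_nonneg hcc' j k hk)
    rintro s ⟨h1, h2, h3⟩
    exact ⟨h1, fun x hx y hy => (h2 x hx y hy).trans hj, h3⟩
  obtain ⟨lab, hlab⟩ := exists_lab B hdisj hcov ⟨_, he⟩
  let Q : ℕ → Multiset (Fin m × Bool) → Prop := fun n t => ∃ s, t = s.map lab ∧ Fine G δ n s
  have hQ : ∀ k ≤ d, push lab (sub e j k) ∈ S (Q (k + 1)) := by
    intro k hk
    refine map_S _ ?_ (hfine k hk)
    intro s hs
    rw [push_sg]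
    exact sg_mem ⟨s, rfl, hs⟩
  have hfan := fan_comb (fun k => push lab (sub e j k)) d (fun t => ∃ n, Q n t) ?_ ?_ ?_ ?_ d le_rfl
  · obtain ⟨t, σ, ⟨s, rfl, hcard, hmesh, F, hF, hs⟩, l, hl, hal⟩ := exists_alt (hQ d le_rfl) hfan
    have hlen : l.length = d + 1 := by
      rw [← Multiset.coe_card, hl, Multiset.card_map, hcard]
    have hpt : ∀ i : Fin (d + 1), ∃ x ∈ s, lab x = l[(i : ℕ)]'(by rw [hlen]; exact i.2) := by
      intro i
      have : l[(i : ℕ)]'(by rw [hlen]; exact i.2) ∈ s.map lab := by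
        rw [← hl]
        exact Multiset.mem_coe.2 (List.getElem_mem _)
      simpa using this
    choose x hxs hxl using hpt
    have hxK : ∀ i, x i ∈ K := fun i => hGK F hF (hs _ (hxs i))
    have hmono : StrictMono (fun i => (lab (x i)).1) := by
      intro a b hab
      dsimp only
      rw [hxl, hxl]
      exact List.pairwise_iff_getElem.1 (Alt_sorted hal) _ _ _ _ hab
    have hsgn : ∀ i : Fin (d + 1), (lab (x i)).2 = if (i : ℕ) % 2 = 0 then σ else !σ := by
      intro i
      rw [hxl]
      exact Alt_get hal _ _
    cases σ with
    | false =>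
      refine hδ1 _ hmono x ?_ (fun a b => hmesh _ (hxs a) _ (hxs b))
      intro i
      have h1 := (hlab _ (hxK i)).1
      rw [hsgn i] at h1
      by_cases h : (i : ℕ) % 2 = 0
      · simpa [h] using h1
      · simpa [h] using h1
    | true =>
      refine hδ1 _ hmono (fun i => -x i) ?_ (fun a b => by
        rw [dist_neg_neg]; exact hmesh _ (hxs a) _ (hxs b))
      intro i
      have h1 := (hlab _ (hxK i)).1
      rw [hsgn i] at h1
      by_cases h : (i : ℕ) % 2 = 0
      · simpa [h] using h1
      · simpa [h] using h1
  · rintro t ⟨n, s, rfl, hcard, hmesh, F, hF, hs⟩ u hu v hv huv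
    obtain ⟨a, ha, rfl⟩ := Multiset.mem_map.1 hu
    obtain ⟨b, hb, rfl⟩ := Multiset.mem_map.1 hv
    have h1 := (hlab _ (hGK F hF (hs _ ha))).1
    have h2 := (hlab _ (hGK F hF (hs _ hb))).1
    refine Prod.ext huv ?_
    rw [← huv] at h2
    cases p : (lab a).2 <;> cases q : (lab b).2
    · rfl
    · exfalso
      rw [p] at h1
      rw [q] at h2
      exact hδ2 _ b a (by simpa using h2) (by simpa using h1) (hmesh _ hb _ ha)
    · exfalso
      rw [p] at h1
      rw [q] at h2
      exact hδ2 _ a b (by simpa using h1) (by simpa using h2) (hmesh _ ha _ hb)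
    · rfl
  · intro k hk
    exact S_mono (fun t ht => ⟨_, ht⟩) (hQ k hk)
  · simp only [← push_bd, bd_sub_zero, push_sg, Multiset.map_zero]
  · intro k hk
    simp only [← push_bd, bd_sub, map_add]
    congr 1
    refine eq_on_S (f := push lab ∘ₗ push neg') (g := push flip ∘ₗ push lab) ?_ (hfine k hk.le)
    rintro s ⟨-, -, F, hF, hs⟩
    simp only [LinearMap.comp_apply, push_sg, Multiset.map_map]
    congr 1
    apply Multiset.map_congr rfl
    intro x hx
    exact (hlab x (hGK F hF (hs x hx))).2

end Geom

/-! ### The cross-polytope -/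

section Cross

variable (d : ℕ)

def face (σ : Fin (d + 1) → ℝ) : Set (EuclideanSpace ℝ (Fin (d + 1))) :=
  {x | (∀ i, 0 ≤ σ i * x i) ∧ ∑ i, σ i * x i = 1}

def faces : Set (Set (EuclideanSpace ℝ (Fin (d + 1)))) := {F | ∃ σ : Fin (d + 1) → ℝ, (∀ i, σ i = 1 ∨ σ i = -1) ∧ F = face d σ}

def KK : Set (EuclideanSpace ℝ (Fin (d + 1))) := {x | ∑ i, |x i| = 1}

def ee (k : ℕ) : EuclideanSpace ℝ (Fin (d + 1)) := EuclideanSpace.single (Fin.ofNat (d + 1) k) 1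

lemma ee_self (k : ℕ) : ee d k (Fin.ofNat (d + 1) k) = 1 := by simp [ee]

lemma ee_ne {k : ℕ} {i : Fin (d + 1)} (h : i ≠ Fin.ofNat (d + 1) k) : ee d k i = 0 := by
  rw [ee, PiLp.single_apply, if_neg h]

lemma face_convex (σ : Fin (d + 1) → ℝ) : Convex ℝ (face d σ) := by
  rintro x ⟨hx1, hx2⟩ y ⟨hy1, hy2⟩ a b ha hb hab
  refine ⟨?_, ?_⟩
  · intro i
    have : σ i * (a • x + b • y) i = a * (σ i * x i) + b * (σ i * y i) := by
      simp; ring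
    rw [this]
    have := hx1 i
    have := hy1 i
    positivity
  · have : ∀ i, σ i * (a • x + b • y) i = a * (σ i * x i) + b * (σ i * y i) := by
      intro i
      simp; ring
    simp only [this, Finset.sum_add_distrib, ← Finset.mul_sum, hx2, hy2]
    linarith

lemma face_sub (σ : Fin (d + 1) → ℝ) (hσ : ∀ i, σ i = 1 ∨ σ i = -1) : face d σ ⊆ KK d := by
  rintro x ⟨h1, h2⟩
  have : ∀ i, |x i| = σ i * x i := by
    intro i
    rw [← abs_of_nonneg (h1 i), abs_mul]
    rcases hσ i with h | h <;> simp [h]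
  simp only [KK, Set.mem_ofPred_eq, this, h2]

lemma KK_compact : IsCompact (KK d) := by
  apply Metric.isCompact_of_isClosed_isBounded
  · apply isClosed_eq
    · fun_prop
    · fun_prop
  · apply (Metric.isBounded_closedBall (x := (0 : EuclideanSpace ℝ (Fin (d + 1)))) (r := 1)).subset
    intro x hx
    have hx' : ∑ i, |x i| = 1 := hx
    rw [mem_closedBall_zero_iff, EuclideanSpace.norm_eq, Real.sqrt_le_iff]
    refine ⟨zero_le_one, ?_⟩
    rw [one_pow, ← hx']
    apply Finset.sum_le_sum
    intro i _
    have h1 : |x i| ≤ 1 := by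
      rw [← hx']
      exact Finset.single_le_sum (f := fun i => |x i|) (fun i _ => abs_nonneg _) (Finset.mem_univ i)
    rw [Real.norm_eq_abs]
    nlinarith [abs_nonneg (x i)]

lemma cc_faces (k : ℕ) (hk : k ≤ d) : cc (ee d) k ∈ S (fun s => s.card = k + 1 ∧
    ∃ σ : Fin (d + 1) → ℝ, (∀ i, σ i = 1 ∨ σ i = -1) ∧ ∀ x ∈ s, x ∈ face d σ ∧
      ∀ i : Fin (d + 1), k < i → x i = 0) := by
  have hval : ∀ k ≤ d, ((Fin.ofNat (d + 1) k : Fin (d + 1)) : ℕ) = k := by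
    intro k hk
    simp [Nat.mod_eq_of_lt (Nat.lt_succ_of_le hk)]
  have hee : ∀ k ≤ d, ∀ σ : Fin (d + 1) → ℝ, σ (Fin.ofNat (d + 1) k) = 1 →
      ee d k ∈ face d σ ∧ ∀ i : Fin (d + 1), k < i → ee d k i = 0 := by
    intro k hk σ hσ
    refine ⟨⟨?_, ?_⟩, ?_⟩
    · intro i
      by_cases h : i = Fin.ofNat (d + 1) k
      · subst h
        rw [hσ]
        simp [ee]
      · simp [ee_ne d h]
    · rw [Finset.sum_eq_single (Fin.ofNat (d + 1) k)]
      · rw [hσ]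
        simp [ee]
      · intro b _ hb
        simp [ee_ne d hb]
      · simp
    · intro i hi
      have h : i ≠ Fin.ofNat (d + 1) k := by
        rintro rfl
        rw [hval k hk] at hi
        exact lt_irrefl _ hi
      simp [ee_ne d h]
  induction k with
  | zero =>
    apply sg_mem
    refine ⟨by simp, fun _ => 1, by simp, ?_⟩
    intro x hx
    rw [Multiset.mem_singleton.1 hx]
    exact hee 0 (by omega) _ rfl
  | succ k ih =>
    have ih := ih (by omega)
    rw [cc_succ]
    refine map_S (P := (fun s => s.card = k + 1 ∧
      ∃ σ : Fin (d + 1) → ℝ, (∀ i, σ i = 1 ∨ σ i = -1) ∧ ∀ x ∈ s, x ∈ face d σ ∧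
      ∀ i : Fin (d + 1), k < i → x i = 0)) _ ?_ ?_
    · rintro s ⟨h1, σ, hσ, h2⟩
      rw [cone_sg]
      apply sg_mem
      refine ⟨by simp [h1], Function.update σ (Fin.ofNat (d + 1) (k + 1)) 1, ?_, ?_⟩
      · intro i
        by_cases h : i = Fin.ofNat (d + 1) (k + 1)
        · subst h; simp
        · rw [Function.update_of_ne h]; exact hσ i
      · intro x hx
        rcases Multiset.mem_cons.1 hx with rfl | hx
        · exact hee _ hk _ (by simp)
        · obtain ⟨⟨h3, h4⟩, h5⟩ := h2 x hx
          have hz : x (Fin.ofNat (d + 1) (k + 1)) = 0 := h5 _ (by rw [hval _ hk]; omega)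
          have heq : ∀ i, Function.update σ (Fin.ofNat (d + 1) (k + 1)) 1 i * x i = σ i * x i := by
            intro i
            by_cases h : i = Fin.ofNat (d + 1) (k + 1)
            · rw [h, hz]; simp
            · rw [Function.update_of_ne h]
          refine ⟨⟨?_, ?_⟩, fun i hi => h5 i (by omega)⟩
          · intro i
            rw [heq]
            exact h3 i
          · simp only [heq, h4]
    · refine Submodule.add_mem _ ih (map_S _ ?_ ih)
      rintro s ⟨h1, σ, hσ, h2⟩
      rw [push_sg]
      apply sg_mem
      refine ⟨by simp [h1], fun i => -σ i, ?_, ?_⟩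
      · intro i
        rcases hσ i with h | h <;> simp [h]
      · intro x hx
        obtain ⟨y, hy, rfl⟩ := Multiset.mem_map.1 hx
        obtain ⟨⟨h3, h4⟩, h5⟩ := h2 y hy
        refine ⟨⟨?_, ?_⟩, ?_⟩
        · intro i
          simpa [neg'] using h3 i
        · simpa [neg'] using h4
        · intro i hi
          simpa [neg'] using h5 i hi

end Cross

end

end Fan

/-- Fan's theorem: for closed sets `A₁,…,A_m ⊆ S^d` with `A_i ∩ (-A_i) = ∅` that together
with their antipodes cover `S^d`, there are indices `i₁ < ⋯ < i_{d+1}` with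
`-A_{i₁} ∩ A_{i₂} ∩ -A_{i₃} ∩ ⋯ ≠ ∅` (alternating signs, starting with `-`). -/
theorem stmt2 (d m : ℕ)
    (A : Fin m → Set (EuclideanSpace ℝ (Fin (d + 1))))
    (hclosed : ∀ i, IsClosed (A i))
    (hsub : ∀ i, A i ⊆ Metric.sphere (0 : EuclideanSpace ℝ (Fin (d + 1))) 1)
    (hdisj : ∀ i, A i ∩ (-A i) = ∅)
    (hcover : Metric.sphere (0 : EuclideanSpace ℝ (Fin (d + 1))) 1 ⊆ ⋃ i, (A i ∪ -A i)) :
    ∃ ι : Fin (d + 1) → Fin m, StrictMono ι ∧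
      (⋂ j : Fin (d + 1),
        (if (j : ℕ) % 2 = 0 then -A (ι j) else A (ι j))).Nonempty := by
  have hK0 : ∀ x ∈ Fan.KK d, x ≠ 0 := by
    rintro x hx rfl
    simp [Fan.KK] at hx
  have hKc := Fan.KK_compact d
  have hKneg : ∀ x ∈ Fan.KK d, -x ∈ Fan.KK d := by
    intro x hx
    simpa [Fan.KK] using hx
  let B : Fin m → Set (EuclideanSpace ℝ (Fin (d + 1))) :=
    fun i => Fan.KK d ∩ (fun x => ‖x‖⁻¹ • x) ⁻¹' A i
  have hcont : ContinuousOn (fun x : EuclideanSpace ℝ (Fin (d + 1)) => ‖x‖⁻¹ • x) (Fan.KK d) := by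
    refine ContinuousOn.smul (f := fun x => ‖x‖⁻¹) (g := fun x => x) ?_ continuousOn_id
    apply ContinuousOn.inv₀ continuous_norm.continuousOn
    intro x hx
    exact norm_ne_zero_iff.2 (hK0 x hx)
  have hee : Fan.ee d 0 ∈ Fan.KK d := by
    simp only [Fan.KK, Set.mem_ofPred_eq]
    rw [Finset.sum_eq_single (Fin.ofNat (d + 1) 0)]
    · rw [Fan.ee_self d 0, abs_one]
    · intro b _ hb
      simp [Fan.ee_ne d hb]
    · simp
  obtain ⟨ι, hι, x, hx⟩ := Fan.fan_abs (m := m) d hKc (Fan.faces d)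
    (by rintro F ⟨σ, -, rfl⟩; exact Fan.face_convex d σ)
    (by rintro F ⟨σ, hσ, rfl⟩; exact Fan.face_sub d σ hσ) (Fan.ee d) hee
    (by
      intro k hk
      refine Fan.S_mono ?_ (Fan.cc_faces d k hk)
      rintro s ⟨h1, σ, hσ, h2⟩
      exact ⟨h1, _, ⟨σ, hσ, rfl⟩, fun x hx => (h2 x hx).1⟩)
    B (fun i => hcont.preimage_isClosed_of_isClosed hKc.isClosed (hclosed i))
    (fun i => Set.inter_subset_left) hKneg
    (by
      intro i
      apply Set.eq_empty_of_forall_notMem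
      rintro x ⟨⟨-, h1⟩, ⟨-, h2⟩⟩
      have : ‖x‖⁻¹ • x ∈ A i ∩ -A i := ⟨h1, by simpa using h2⟩
      rw [hdisj] at this
      exact this)
    (by
      intro x hx
      have hn : ‖x‖⁻¹ • x ∈ Metric.sphere (0 : EuclideanSpace ℝ (Fin (d + 1))) 1 := by
        rw [mem_sphere_zero_iff_norm, norm_smul, norm_inv, norm_norm,
          inv_mul_cancel₀ (norm_ne_zero_iff.2 (hK0 x hx))]
      obtain ⟨i, hi⟩ := Set.mem_iUnion.1 (hcover hn)
      refine Set.mem_iUnion.2 ⟨i, ?_⟩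
      rcases hi with h | h
      · exact Or.inl ⟨hx, h⟩
      · exact Or.inr ⟨hKneg x hx, by simpa using h⟩)
  refine ⟨ι, hι, ‖x‖⁻¹ • x, ?_⟩
  rw [Set.mem_iInter] at hx ⊢
  intro j
  have := hx j
  by_cases h : (j : ℕ) % 2 = 0
  · rw [if_pos h] at this ⊢
    simpa using this.2
  · rw [if_neg h] at this ⊢
    exact this.2
end

section
/- Let A₁, ..., A_{d+1} ⊂ S^d be closed sets such that A_i ∩ (-A_i) = ∅ for all i ∈ [d+1] and ⋃_i A_i ∪ ⋃_i (-A_i) = S^d. Then ⋂_{i=1}^{d+1} A_i ≠ ∅. -/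
open Pointwise

namespace FanProof

abbrev Ch (E : Type*) := List E →₀ ZMod 2

noncomputable section

section chains
variable {E : Type*}

def cone (v : E) : Ch E →ₗ[ZMod 2] Ch E := Finsupp.lmapDomain _ _ (List.cons v)

lemma cone_single (v : E) (l : List E) (a : ZMod 2) :
    cone v (Finsupp.single l a) = Finsupp.single (v :: l) a := by
  simp [cone, Finsupp.lmapDomain_apply, Finsupp.mapDomain_single]

def bdl : List E → Ch E
  | [] => 0
  | v :: l => Finsupp.single l 1 + cone v (bdl l)

def bd : Ch E →ₗ[ZMod 2] Ch E := Finsupp.linearCombination (ZMod 2) bdl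

lemma bd_single (l : List E) : bd (Finsupp.single l 1) = bdl l := by
  simp [bd]

def sup (P : List E → Prop) : Submodule (ZMod 2) (Ch E) :=
  Finsupp.supported (ZMod 2) (ZMod 2) {l | P l}

lemma single_mem_sup {P : List E → Prop} {l : List E} (h : P l) :
    (Finsupp.single l 1 : Ch E) ∈ sup P :=
  Finsupp.single_mem_supported _ _ h

lemma sup_map {M : Type*} [AddCommGroup M] [Module (ZMod 2) M] {P : List E → Prop}
    (T : Ch E →ₗ[ZMod 2] M) (Q : Submodule (ZMod 2) M)
    (h : ∀ l, P l → T (Finsupp.single l 1) ∈ Q) {c : Ch E} (hc : c ∈ sup P) : T c ∈ Q := by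
  have : sup P ≤ Q.comap T := by
    unfold sup
    rw [Finsupp.supported_eq_span_single, Submodule.span_le]
    rintro _ ⟨l, hl, rfl⟩
    exact h l hl
  exact this hc

lemma sup_eq {M : Type*} [AddCommGroup M] [Module (ZMod 2) M] {P : List E → Prop}
    (T T' : Ch E →ₗ[ZMod 2] M)
    (h : ∀ l, P l → T (Finsupp.single l 1) = T' (Finsupp.single l 1)) {c : Ch E}
    (hc : c ∈ sup P) : T c = T' c := by
  have := sup_map (T - T') ⊥ (fun l hl => by simp [h l hl]) hc
  simpa [sub_eq_zero] using this

lemma sup_mono {P Q : List E → Prop} (h : ∀ l, P l → Q l) {c : Ch E} (hc : c ∈ sup P) :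
    c ∈ sup Q := Finsupp.supported_mono (fun l hl => h l hl) hc

lemma cone_mem {P Q : List E → Prop} (v : E) (h : ∀ l, P l → Q (v :: l)) {c : Ch E}
    (hc : c ∈ sup P) : cone v c ∈ sup Q :=
  sup_map (cone v) _ (fun l hl => by rw [cone_single]; exact single_mem_sup (h l hl)) hc

lemma bd_cone (v : E) (c : Ch E) : bd (cone v c) = c + cone v (bd c) := by
  have : bd ∘ₗ cone v = LinearMap.id + cone v ∘ₗ bd := by
    ext l : 2
    simp [cone_single, bd_single, bdl]
  exact congrArg (fun f => f c) this

lemma add_self_ch (c : Ch E) : c + c = 0 := by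
  ext l; simp [CharTwo.add_self_eq_zero]

lemma bd_bdl (l : List E) : bd (bdl l) = 0 := by
  induction l with
  | nil => simp [bdl]
  | cons v l ih => simp [bdl, bd_cone, bd_single, ih, add_self_ch]

lemma bdl_mem (l : List E) : bdl l ∈ sup (fun u : List E => u.length + 1 = l.length ∧ u.Sublist l) := by
  induction l with
  | nil => simp [bdl]
  | cons v l ih =>
    refine Submodule.add_mem _ (single_mem_sup ⟨by simp, List.sublist_cons_self _ _⟩) ?_
    exact cone_mem v (fun u hu => ⟨by simpa using hu.1, hu.2.cons_cons v⟩) ih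

end chains

section neg
variable {E : Type*} [AddCommGroup E]

def ng : Ch E →ₗ[ZMod 2] Ch E := Finsupp.lmapDomain _ _ (List.map Neg.neg)

lemma ng_single (l : List E) (a : ZMod 2) :
    ng (Finsupp.single l a) = Finsupp.single (l.map Neg.neg) a := by
  simp [ng, Finsupp.lmapDomain_apply, Finsupp.mapDomain_single]

lemma ng_ng (c : Ch E) : ng (ng c) = c := by
  have : ng ∘ₗ ng = (LinearMap.id : Ch E →ₗ[ZMod 2] Ch E) := by
    ext l : 2
    simp [ng_single]
  exact congrArg (fun f => f c) this

lemma ng_cone (v : E) (c : Ch E) : ng (cone v c) = cone (-v) (ng c) := by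
  have : ng ∘ₗ cone v = cone (-v) ∘ₗ ng := by
    ext l : 2
    simp [ng_single, cone_single]
  exact congrArg (fun f => f c) this

lemma ng_bdl (l : List E) : ng (bdl l) = bdl (l.map Neg.neg) := by
  induction l with
  | nil => simp [bdl]
  | cons v l ih => simp [bdl, ng_cone, ng_single, ih]

lemma ng_bd (c : Ch E) : ng (bd c) = bd (ng c) := by
  have : ng ∘ₗ bd = bd ∘ₗ (ng : Ch E →ₗ[ZMod 2] Ch E) := by
    ext l : 2
    simp [ng_single, bd_single, ng_bdl]
  exact congrArg (fun f => f c) this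

lemma ng_mem {P Q : List E → Prop} (h : ∀ l, P l → Q (l.map Neg.neg)) {c : Ch E}
    (hc : c ∈ sup P) : ng c ∈ sup Q :=
  sup_map ng _ (fun l hl => by rw [ng_single]; exact single_mem_sup (h l hl)) hc

/-- octahedral chains -/
def oc (e : ℕ → E) : ℕ → Ch E
  | 0 => Finsupp.single [e 0] 1
  | k + 1 => cone (e (k + 1)) (oc e k + ng (oc e k))

lemma bd_oc_zero (e : ℕ → E) : bd (oc e 0) = Finsupp.single [] 1 := by
  simp [oc, bd_single, bdl]

lemma bd_oc_succ (e : ℕ → E) (k : ℕ) : bd (oc e (k + 1)) = oc e k + ng (oc e k) := by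
  have key : bd (oc e k + ng (oc e k)) = 0 := by
    rw [map_add, ← ng_bd]
    cases k with
    | zero => rw [bd_oc_zero, ng_single]; simp [add_self_ch]
    | succ k =>
      rw [bd_oc_succ e k, map_add, ng_ng, add_comm (ng _), add_self_ch]
  rw [oc, bd_cone, key]; simp

end neg

section sd
variable {E : Type*} [NormedAddCommGroup E] [NormedSpace ℝ E]

def bary (l : List E) : E := (l.length : ℝ)⁻¹ • l.sum

lemma bary_neg (l : List E) : bary (l.map Neg.neg) = - bary l := by
  have : (l.map Neg.neg).sum = - l.sum := by
    induction l with
    | nil => simp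
    | cons v l ih => simp [ih, add_comm]
  simp [bary, this]

lemma bary_mem {G : Set E} (hG : Convex ℝ G) (l : List E) (hl : l ≠ []) (h : ∀ x ∈ l, x ∈ G) :
    bary l ∈ G := by
  have hpos : (0 : ℝ) < l.length := by
    have := List.length_pos_of_ne_nil hl
    exact_mod_cast this
  have h1 : bary l = ∑ i : Fin l.length, (l.length : ℝ)⁻¹ • l[i] := by
    rw [bary, ← Finset.smul_sum]
    congr 1
    exact (Fin.sum_univ_getElem l).symm
  rw [h1]
  apply hG.sum_mem
  · intro i _; positivity
  · simp [hpos.ne']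
  · intro i _; exact h _ (by simp)

lemma norm_sum_le (l : List E) (r : ℝ) (h : ∀ x ∈ l, ‖x‖ ≤ r) : ‖l.sum‖ ≤ l.length * r := by
  induction l with
  | nil => simp
  | cons v l ih =>
    have h1 := h v (by simp)
    have h2 := ih (fun x hx => h x (by simp [hx]))
    have h3 := norm_add_le v l.sum
    simp only [List.sum_cons, List.length_cons]
    push_cast
    linarith

lemma bary_dist (N : ℕ) (l : List E) (hN : l.length ≤ N) (r : ℝ) (hr : 0 ≤ r)
    (h : ∀ x ∈ l, ∀ y ∈ l, dist x y ≤ r) (v : E) (hv : v ∈ l) :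
    dist v (bary l) ≤ (1 - 1 / (N : ℝ)) * r := by
  classical
  have hp := List.perm_cons_erase hv
  set u := l.erase v with hu
  have hlen : l.length = u.length + 1 := by simpa using hp.length_eq
  have hsum : l.sum = v + u.sum := by simpa using hp.sum_eq
  have hs : ∀ w : List E, (w.map (fun x => x - v)).sum = w.sum - (w.length : ℝ) • v := by
    intro w
    induction w with
    | nil => simp
    | cons a w ih => simp [ih, add_smul]; abel
  have hn : (0 : ℝ) < l.length := by rw [hlen]; positivity
  have h1 : bary l - v = (l.length : ℝ)⁻¹ • (u.map (fun x => x - v)).sum := by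
    rw [hs, bary, hsum]
    have : v = (l.length : ℝ)⁻¹ • ((l.length : ℝ) • v) := by
      rw [smul_smul, inv_mul_cancel₀ hn.ne', one_smul]
    nth_rewrite 2 [this]
    rw [← smul_sub]
    congr 1
    rw [hlen]; push_cast; rw [add_smul, one_smul]; abel
  rw [dist_comm, dist_eq_norm, h1, norm_smul, Real.norm_of_nonneg (by positivity)]
  have h2 := norm_sum_le (u.map (fun x => x - v)) r (by
    intro x hx
    simp only [List.mem_map] at hx
    obtain ⟨y, hy, rfl⟩ := hx
    rw [← dist_eq_norm]
    exact h _ (List.mem_of_mem_erase hy) _ hv)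
  rw [List.length_map] at h2
  have h3 : (l.length : ℝ)⁻¹ * (u.length * r) = (1 - 1 / (l.length : ℝ)) * r := by
    rw [hlen]; push_cast; field_simp; ring
  calc _ ≤ (l.length : ℝ)⁻¹ * (u.length * r) := by gcongr
    _ = _ := h3
    _ ≤ _ := by
      have : (l.length : ℝ) ≤ N := by exact_mod_cast hN
      gcongr

def S : ℕ → (Ch E →ₗ[ZMod 2] Ch E)
  | 0 => LinearMap.id
  | n + 1 => Finsupp.linearCombination (ZMod 2) (fun l => cone (bary l) (S n (bdl l)))

lemma S_single (n : ℕ) (l : List E) :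
    S (n + 1) (Finsupp.single l 1) = cone (bary l) (S n (bdl l)) := by
  simp [S]

lemma S_ng (n : ℕ) (c : Ch E) : S n (ng c) = ng (S n c) := by
  induction n generalizing c with
  | zero => simp [S]
  | succ n ih =>
    have : S (n + 1) ∘ₗ ng = ng ∘ₗ (S (n + 1) : Ch E →ₗ[ZMod 2] Ch E) := by
      ext l : 2
      simp only [LinearMap.comp_apply, Finsupp.lsingle_apply, ng_single, S_single, bary_neg,
        ng_cone, ← ng_bdl, ih]
    exact congrArg (fun f => f c) this

lemma bd_S (n : ℕ) {c : Ch E} (hc : c ∈ sup (fun l : List E => l.length = n + 1)) :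
    bd (S (n + 1) c) = S n (bd c) := by
  induction n generalizing c with
  | zero =>
    suffices h : ∀ l : List E, l.length = 0 + 1 → (bd ∘ₗ S (0 + 1)) (Finsupp.single l 1) =
        (S 0 ∘ₗ bd) (Finsupp.single l 1) from
      sup_eq (P := fun l : List E => l.length = 0 + 1) (bd ∘ₗ S (0 + 1)) (S 0 ∘ₗ bd) h hc
    intro l hl
    obtain ⟨v, rfl⟩ := List.length_eq_one_iff.mp hl
    simp [S_single, S, bd_single, bdl, bd_cone]
  | succ n ih =>
    suffices h : ∀ l : List E, l.length = n + 1 + 1 → (bd ∘ₗ S (n + 1 + 1)) (Finsupp.single l 1) =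
        (S (n + 1) ∘ₗ bd) (Finsupp.single l 1) from
      sup_eq (P := fun l : List E => l.length = n + 1 + 1) (bd ∘ₗ S (n + 1 + 1))
        (S (n + 1) ∘ₗ bd) h hc
    intro l hl
    have hm : bdl l ∈ sup (fun u : List E => u.length = n + 1) :=
      sup_mono (fun u hu => by have := hu.1; omega) (bdl_mem l)
    simp only [LinearMap.comp_apply]
    rw [S_single, bd_cone, ih hm, bd_bdl, bd_single]
    simp

/-- `u` is a piece of the subdivision of `l`. -/
def Piece (N : ℕ) (l u : List E) : Prop :=
  u.length = l.length ∧ (∀ G : Set E, Convex ℝ G → (∀ x ∈ l, x ∈ G) → ∀ x ∈ u, x ∈ G) ∧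
    ∀ r : ℝ, 0 ≤ r → (∀ x ∈ l, ∀ y ∈ l, dist x y ≤ r) →
      ∀ x ∈ u, ∀ y ∈ u, dist x y ≤ (1 - 1 / (N : ℝ)) * r

lemma S_piece (N n : ℕ) (l : List E) (hl : l.length = n) (hn : n ≤ N) :
    S n (Finsupp.single l 1) ∈ sup (Piece N l) := by
  induction n generalizing l with
  | zero =>
    have : l = [] := List.length_eq_zero_iff.mp hl
    subst this
    exact single_mem_sup ⟨rfl, by simp, by simp⟩
  | succ n ih =>
    rw [S_single]
    have h1 : S n (bdl l) ∈ sup (fun u => ∃ w : List E, w.length + 1 = l.length ∧ w.Sublist l ∧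
        Piece N w u) := by
      refine sup_map (S n) _ ?_ (bdl_mem l)
      intro w hw
      exact sup_mono (fun u hu => ⟨w, hw.1, hw.2, hu⟩) (ih w (by omega) (by omega))
    refine cone_mem _ ?_ h1
    rintro u ⟨w, hwl, hws, hu1, hu2, hu3⟩
    have hne : l ≠ [] := by rintro rfl; simp at hl
    have hN : (0 : ℝ) ≤ 1 - 1 / (N : ℝ) := by
      have : (1 : ℝ) ≤ N := by exact_mod_cast (by omega : 1 ≤ N)
      rw [sub_nonneg, div_le_one (by linarith)]; exact this
    refine ⟨by simp [hu1, hwl], ?_, ?_⟩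
    · intro G hG hlG x hx
      rcases List.mem_cons.mp hx with rfl | hx
      · exact bary_mem hG l hne hlG
      · exact hu2 G hG (fun y hy => hlG y (hws.subset hy)) x hx
    · intro r hr hd
      have hb : ∀ x ∈ u, dist x (bary l) ≤ (1 - 1 / (N : ℝ)) * r := by
        intro x hx
        have := hu2 (Metric.closedBall (bary l) ((1 - 1 / (N : ℝ)) * r))
          (convex_closedBall _ _) (fun y hy => by
            rw [Metric.mem_closedBall]
            exact bary_dist N l (by omega) r hr hd y (hws.subset hy)) x hx
        exact this
      intro x hx y hy
      rcases List.mem_cons.mp hx with rfl | hx <;> rcases List.mem_cons.mp hy with rfl | hy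
      · rw [dist_self]; positivity
      · rw [dist_comm]; exact hb y hy
      · exact hb x hx
      · exact hu3 r hr (fun a ha b hb => hd a (hws.subset ha) b (hws.subset hb)) x hx y hy

end sd

section labels

/-- alternating starting with `b` -/
def alt : Bool → List Bool → ZMod 2
  | _, [] => 1
  | b, s :: t => if s = b then alt (!b) t else 0

def B {E : Type*} : (List E → ZMod 2) → List E → ZMod 2
  | _, [] => 0
  | F, v :: t => F t + B (fun u => F (v :: u)) t

variable {E : Type*}

lemma lc_bdl (F : List E → ZMod 2) (l : List E) :
    Finsupp.linearCombination (ZMod 2) F (bdl l) = B F l := by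
  induction l generalizing F with
  | nil => simp [bdl, B]
  | cons v t ih =>
    have : Finsupp.linearCombination (ZMod 2) F (cone v (bdl t)) =
        Finsupp.linearCombination (ZMod 2) (fun u => F (v :: u)) (bdl t) := by
      simp only [cone, Finsupp.lmapDomain_apply, Finsupp.linearCombination_mapDomain]
      rfl
    simp [bdl, B, this, ih]

lemma B_perm {l l' : List E} (h : l.Perm l') : ∀ (F : List E → ZMod 2)
    (_ : ∀ u u', u.Perm u' → F u = F u'), B F l = B F l' := by
  induction h with
  | nil => intros; rfl
  | cons x h ih =>
    intro F hF
    simp only [B]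
    rw [hF _ _ h, ih _ (fun u u' hu => hF _ _ (hu.cons x))]
  | swap x y t =>
    intro F hF
    simp only [B]
    have : (fun u => F (x :: y :: u)) = (fun u => F (y :: x :: u)) := by
      funext u; exact hF _ _ (List.Perm.swap _ _ _)
    rw [this]; ring
  | trans _ _ ih1 ih2 => intro F hF; rw [ih1 F hF, ih2 F hF]

lemma B_congr (l : List E) : ∀ (F G : List E → ZMod 2) (_ : ∀ u, u.Sublist l → F u = G u),
    B F l = B G l := by
  induction l with
  | nil => intros; rfl
  | cons v t ih =>
    intro F G h
    simp only [B]
    rw [h _ (List.sublist_cons_self _ _), ih _ _ (fun u hu => h _ (hu.cons_cons v))]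

lemma B_zero (l : List E) : B (fun _ => 0) l = 0 := by
  induction l with
  | nil => rfl
  | cons v t ih => simp [B, ih]

lemma B_alt (g : E → Bool) (l : List E) (hl : l ≠ []) (b : Bool) :
    B (fun u => alt b (u.map g)) l = alt true (l.map g) + alt false (l.map g) := by
  induction l generalizing b with
  | nil => exact absurd rfl hl
  | cons v t ih =>
    by_cases ht : t = []
    · subst ht
      cases h : g v <;> cases b <;> simp [B, alt, h]
    · have ih' := ih ht
      have e : alt true (t.map g) + alt true (t.map g) = 0 := CharTwo.add_self_eq_zero _
      have e' : alt false (t.map g) + alt false (t.map g) = 0 := CharTwo.add_self_eq_zero _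
      cases h : g v <;> cases b <;> simp [B, alt, h, ih', B_zero] 
      · linear_combination e'
      · linear_combination e

abbrev Lab := ℕ ×ₗ Bool

def sg (p : Lab) : Bool := (ofLex p).2
def ix (p : Lab) : ℕ := (ofLex p).1
def flip (p : Lab) : Lab := toLex (ix p, !(sg p))

def FF (lab : E → Lab) (b : Bool) (l : List E) : ZMod 2 :=
  alt b ((Multiset.sort (l.map lab : Multiset Lab) (· ≤ ·)).map sg)

lemma FF_perm (lab : E → Lab) (b : Bool) (u u' : List E) (h : u.Perm u') :
    FF lab b u = FF lab b u' := by
  unfold FF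
  rw [Multiset.coe_eq_coe.mpr (h.map lab)]

lemma FF_sorted (lab : E → Lab) (b : Bool) (u : List E)
    (h : (u.map lab).Pairwise (· ≤ ·)) : FF lab b u = alt b (u.map (fun x => sg (lab x))) := by
  unfold FF
  have : Multiset.sort (u.map lab : Multiset Lab) (· ≤ ·) = u.map lab := by
    rw [Multiset.coe_sort]
    exact List.mergeSort_eq_self _ h
  rw [this, List.map_map]; rfl

lemma FF_bd (lab : E → Lab) (l : List E) (hl : l ≠ []) (b : Bool) :
    B (FF lab b) l = FF lab true l + FF lab false l := by
  classical
  let r : E → E → Prop := fun x y => lab x ≤ lab y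
  have : Std.Total r := ⟨fun x y => le_total (lab x) (lab y)⟩
  have : IsTrans E r := ⟨fun x y z h h' => le_trans (α := Lab) h h'⟩
  let l' := l.insertionSort r
  have hp : l'.Perm l := List.perm_insertionSort r l
  have hs : l'.Pairwise r := List.pairwise_insertionSort r l
  have hs' : ∀ u : List E, u.Sublist l' → (u.map lab).Pairwise (· ≤ ·) := fun u hu =>
    List.pairwise_map.mpr (hs.sublist hu)
  rw [← B_perm hp _ (FF_perm lab b), ← FF_perm lab _ _ _ hp, ← FF_perm lab _ _ _ hp,
    FF_sorted lab _ _ (hs' _ (List.Sublist.refl _)), FF_sorted lab _ _ (hs' _ (List.Sublist.refl _)),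
    ← B_alt _ l' (by intro h; rw [h] at hp; exact hl (List.nil_perm.mp hp)) b]
  exact B_congr _ _ _ (fun u hu => FF_sorted lab b u (hs' u hu))

lemma alt_not (b : Bool) (L : List Bool) : alt b (L.map not) = alt (!b) L := by
  induction L generalizing b with
  | nil => rfl
  | cons s t ih => cases s <;> cases b <;> simp [alt, ih]

lemma FF_neg [AddCommGroup E] (lab : E → Lab) (b : Bool) (l : List E)
    (hneg : ∀ x ∈ l, lab (-x) = flip (lab x))
    (hnc : ∀ x ∈ l, ∀ y ∈ l, lab x ≠ flip (lab y)) :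
    FF lab b (l.map Neg.neg) = FF lab (!b) l := by
  unfold FF
  set M := Multiset.sort (l.map lab : Multiset Lab) (· ≤ ·) with hM
  have hperm : (M : Multiset Lab) = (l.map lab : List Lab) := Multiset.sort_eq _ _
  have hmem : ∀ p ∈ M, ∃ x ∈ l, lab x = p := by
    intro p hp
    have : p ∈ (l.map lab : List Lab) := (Multiset.coe_eq_coe.mp hperm).mem_iff.mp hp
    simpa using this
  have hsort : M.Pairwise (· ≤ ·) := Multiset.pairwise_sort _ _
  have h2 : (M.map flip).Pairwise (· ≤ ·) := by
    rw [List.pairwise_map]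
    refine List.Pairwise.imp_of_mem ?_ hsort
    intro p q hp hq hpq
    obtain ⟨x, hx, rfl⟩ := hmem p hp
    obtain ⟨y, hy, rfl⟩ := hmem q hq
    have := hnc x hx y hy
    revert this hpq
    generalize lab x = p
    generalize lab y = q
    intro hpq hne
    rw [Prod.Lex.le_iff] at hpq ⊢
    rcases hpq with h | ⟨h, h'⟩
    · left; exact h
    · right
      refine ⟨h, ?_⟩
      have : sg p = sg q := by
        by_contra hcon
        apply hne
        have : sg p = !(sg q) := by
          cases h : sg p <;> cases h' : sg q <;> simp_all
        unfold flip
        rw [← this]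
        have h0 : ix p = ix q := h
        rw [← h0]; rfl
      have h3 : (!(sg p)) ≤ !(sg q) := by rw [this]
      exact h3
  have h3 : Multiset.sort ((l.map Neg.neg).map lab : Multiset Lab) (· ≤ ·) = M.map flip := by
    have : (((l.map Neg.neg).map lab : List Lab) : Multiset Lab) = (M.map flip : List Lab) := by
      rw [← Multiset.map_coe flip M, hperm, Multiset.map_coe, List.map_map, List.map_map]
      congr 1
      apply List.map_congr_left
      intro x hx; exact hneg x hx
    rw [this, Multiset.coe_sort]
    exact List.mergeSort_eq_self _ h2
  rw [h3, ← alt_not, List.map_map, List.map_map]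
  rfl

lemma len_le (L : List Lab) (n j : ℕ) (hs : L.Pairwise (fun p q => ix p < ix q))
    (h : ∀ p ∈ L, j ≤ ix p ∧ ix p < n) : L.length ≤ n - j := by
  induction L generalizing j with
  | nil => simp
  | cons p t ih =>
    rw [List.pairwise_cons] at hs
    have h1 := h p (by simp)
    have := ih (j + 1) hs.2 (fun q hq => ⟨by have := hs.1 q hq; omega, (h q (by simp [hq])).2⟩)
    simp; omega

lemma full (L : List Lab) (n j : ℕ) (b : Bool) (hs : L.Pairwise (fun p q => ix p < ix q))
    (h : ∀ p ∈ L, j ≤ ix p ∧ ix p < n) (hlen : L.length = n - j) (ha : alt b (L.map sg) ≠ 0) :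
    ∀ i, j ≤ i → i < n → ∃ p ∈ L, ix p = i ∧ sg p = xor b (decide ((i - j) % 2 = 1)) := by
  induction L generalizing j b with
  | nil => intro i h1 h2; simp at hlen; omega
  | cons p t ih =>
    have hs0 := hs
    rw [List.pairwise_cons] at hs
    have hp : ix p = j := by
      by_contra hne
      have := len_le (p :: t) n (j + 1) hs0 (fun q hq => by
        have h1 := h p (by simp)
        refine ⟨?_, (h q hq).2⟩
        rcases List.mem_cons.mp hq with rfl | hq
        · omega
        · have := hs.1 q hq; omega)
      have h1 := h p (by simp)
      omega
    have hb : sg p = b := by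
      by_contra hne; simp [alt, hne] at ha
    have ha' : alt (!b) (t.map sg) ≠ 0 := by simpa [alt, hb] using ha
    intro i hi hin
    rcases Nat.eq_or_lt_of_le hi with rfl | hlt
    · exact ⟨p, by simp, hp, by simp [hb]⟩
    · obtain ⟨q, hq, hq1, hq2⟩ := ih (j + 1) (!b) hs.2
        (fun q hq => ⟨by have := hs.1 q hq; omega, (h q (by simp [hq])).2⟩)
        (by simp at hlen; omega) ha' i hlt hin
      refine ⟨q, by simp [hq], hq1, ?_⟩
      rw [hq2]
      rcases Nat.even_or_odd' (i - (j + 1)) with ⟨m, hm | hm⟩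
      · have h1 : (i - (j + 1)) % 2 = 0 := by omega
        have h2 : (i - j) % 2 = 1 := by omega
        simp [h1, h2]
      · have h1 : (i - (j + 1)) % 2 = 1 := by omega
        have h2 : (i - j) % 2 = 0 := by omega
        simp [h1, h2]

lemma strict (L : List Lab) (b : Bool) (hs : L.Pairwise (· ≤ ·))
    (hnc : ∀ p ∈ L, ∀ q ∈ L, p ≠ flip q) (ha : alt b (L.map sg) ≠ 0) :
    L.Pairwise (fun p q => ix p < ix q) := by
  induction L generalizing b with
  | nil => simp
  | cons p t ih =>
    have hb : sg p = b := by
      by_contra hne; simp [alt, hne] at ha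
    have ha' : alt (!b) (t.map sg) ≠ 0 := by simpa [alt, hb] using ha
    have hs0 := hs
    rw [List.pairwise_cons] at hs ⊢
    have iht := ih (!b) hs.2 (fun p hp q hq => hnc p (by simp [hp]) q (by simp [hq])) ha'
    refine ⟨?_, iht⟩
    cases t with
    | nil => simp
    | cons q t =>
      have hq : sg q = !b := by
        by_contra hne; simp [alt, hne] at ha'
      have hpq : ix p < ix q := by
        have := hs.1 q (by simp)
        rw [Prod.Lex.le_iff] at this
        rcases this with h | ⟨h, _⟩
        · exact h
        · exfalso
          apply hnc p (by simp) q (by simp)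
          unfold flip
          rw [hq, Bool.not_not, ← hb, ← (show ix p = ix q from h)]; rfl
      intro a ha
      rcases List.mem_cons.mp ha with rfl | ha
      · exact hpq
      · exact hpq.trans ((List.pairwise_cons.mp iht).1 a ha)

/-- Fan's lemma, chain form. -/
lemma fan [AddCommGroup E] (d : ℕ) (lab : E → Lab) (c : ℕ → Ch E) (P : List E → Prop)
    (h0 : bd (c 0) = Finsupp.single [] 1) (h1 : ∀ k < d, bd (c (k + 1)) = c k + ng (c k))
    (hc : ∀ k ≤ d, c k ∈ sup (fun l => l.length = k + 1 ∧ P l))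
    (hlt : ∀ l, P l → ∀ x ∈ l, ix (lab x) < d + 1)
    (hneg : ∀ l, P l → ∀ x ∈ l, lab (-x) = flip (lab x))
    (hnc : ∀ l, P l → ∀ x ∈ l, ∀ y ∈ l, lab x ≠ flip (lab y)) :
    ∃ l, P l ∧ ∃ b : Bool, ∀ i < d + 1, ∃ x ∈ l, lab x = toLex (i, xor b (decide (i % 2 = 1))) := by
  let a : Bool → Ch E →ₗ[ZMod 2] ZMod 2 := fun b => Finsupp.linearCombination (ZMod 2) (FF lab b)
  have hbd : ∀ k ≤ d, a true (bd (c k)) = a true (c k) + a false (c k) := by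
    intro k hk
    refine sup_eq (a true ∘ₗ bd) (a true + a false) ?_ (hc k hk)
    intro l hl
    have hne : l ≠ [] := by rintro rfl; simp at hl
    simp only [LinearMap.comp_apply, bd_single, a, lc_bdl, LinearMap.add_apply, FF_bd lab l hne]
    simp
  have hng : ∀ k ≤ d, a true (ng (c k)) = a false (c k) := by
    intro k hk
    refine sup_eq (a true ∘ₗ ng) (a false) ?_ (hc k hk)
    intro l hl
    simp only [LinearMap.comp_apply, ng_single, a, Finsupp.linearCombination_single, one_smul]
    rw [FF_neg lab true l (hneg l hl.2) (hnc l hl.2)]; rfl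
  have hone : ∀ k ≤ d, a true (c k) + a false (c k) = 1 := by
    intro k
    induction k with
    | zero =>
      intro hk
      rw [← hbd 0 hk, h0]
      simp [a, FF, alt]
    | succ k ih =>
      intro hk
      rw [← hbd _ hk, h1 k (by omega), map_add, hng k (by omega), ih (by omega)]
  have hex : ∃ l, (l.length = d + 1 ∧ P l) ∧ ∃ b, FF lab b l ≠ 0 := by
    by_contra hcon
    push Not at hcon
    have : (a true + a false) (c d) = (0 : Ch E →ₗ[ZMod 2] ZMod 2) (c d) :=
      sup_eq _ _ (fun l hl => by simp [a, hcon l hl]) (hc d le_rfl)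
    have h2 := hone d le_rfl
    rw [LinearMap.add_apply, h2] at this
    simp at this
  obtain ⟨l, ⟨hlen, hP⟩, b, hb⟩ := hex
  refine ⟨l, hP, b, ?_⟩
  unfold FF at hb
  set M := Multiset.sort (l.map lab : Multiset Lab) (· ≤ ·) with hM
  have hperm : M.Perm (l.map lab) := Multiset.coe_eq_coe.mp (Multiset.sort_eq _ _)
  have hmem : ∀ p ∈ M, ∃ x ∈ l, lab x = p := by
    intro p hp
    simpa using hperm.mem_iff.mp hp
  have hst := strict M b (Multiset.pairwise_sort _ _) (by
    intro p hp q hq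
    obtain ⟨x, hx, rfl⟩ := hmem p hp
    obtain ⟨y, hy, rfl⟩ := hmem q hq
    exact hnc l hP x hx y hy) hb
  intro i hi
  obtain ⟨p, hp, hp1, hp2⟩ := full M (d + 1) 0 b hst (by
    intro p hp
    obtain ⟨x, hx, rfl⟩ := hmem p hp
    exact ⟨by omega, hlt l hP x hx⟩) (by rw [hperm.length_eq]; simp [hlen]) hb i (by omega) hi
  obtain ⟨x, hx, rfl⟩ := hmem p hp
  refine ⟨x, hx, ?_⟩
  rw [Nat.sub_zero] at hp2
  rw [← hp1] at hp2 ⊢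
  rw [← hp2]; rfl

end labels

section geometry

abbrev V (d : ℕ) := EuclideanSpace ℝ (Fin (d + 1))

def Flat {d : ℕ} (l : List (V d)) : Prop :=
  ∃ s : Fin (d + 1) → ℝ, (∀ j, |s j| ≤ 1) ∧ ∀ x ∈ l, ‖x‖ ≤ 1 ∧ ∑ j, s j * x j = 1

lemma flat_convex {d : ℕ} (s : Fin (d + 1) → ℝ) :
    Convex ℝ {x : V d | ‖x‖ ≤ 1 ∧ ∑ j, s j * x j = 1} := by
  have h1 : Convex ℝ {x : V d | ∑ j, s j * x j = 1} := by
    intro x hx y hy a b _ _ hab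
    simp only [Set.mem_ofPred_eq] at *
    have : ∑ j, s j * (a • x + b • y) j = a * ∑ j, s j * x j + b * ∑ j, s j * y j := by
      rw [Finset.mul_sum, Finset.mul_sum, ← Finset.sum_add_distrib]
      apply Finset.sum_congr rfl
      intro j _
      simp only [PiLp.add_apply, PiLp.smul_apply, smul_eq_mul]
      ring
    rw [this, hx, hy]; linarith
  have h2 := (convex_closedBall (0 : V d) 1).inter h1
  have h3 : {x : V d | ‖x‖ ≤ 1 ∧ ∑ j, s j * x j = 1} =
      Metric.closedBall (0 : V d) 1 ∩ {x : V d | ∑ j, s j * x j = 1} := by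
    apply Set.ext
    intro x
    simp
  rw [h3]; exact h2

def ev (d : ℕ) (k : ℕ) : V d := if h : k < d + 1 then EuclideanSpace.single ⟨k, h⟩ 1 else 0

lemma oc_mem (d k : ℕ) (hk : k ≤ d) : oc (ev d) k ∈ sup (fun l : List (V d) =>
    l.length = k + 1 ∧ (∀ x ∈ l, ∀ j : Fin (d + 1), k < j → x j = 0) ∧ Flat l) := by
  induction k with
  | zero =>
    refine single_mem_sup ⟨rfl, ?_, fun _ => 1, by simp, ?_⟩
    · intro x hx j hj
      simp only [List.mem_singleton] at hx
      subst hx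
      have : j ≠ 0 := by intro h; rw [h] at hj; simp at hj
      simp [ev, this]
    · intro x hx
      simp only [List.mem_singleton] at hx
      subst hx
      simp [ev]
  | succ k ih =>
    have h1 := ih (by omega)
    refine cone_mem (P := fun l : List (V d) =>
      l.length = k + 1 ∧ (∀ x ∈ l, ∀ j : Fin (d + 1), k < j → x j = 0) ∧ Flat l) _ ?_
      (Submodule.add_mem _ h1 (ng_mem ?_ h1))
    · rintro l ⟨h1, h2, s, hs, h3⟩
      refine ⟨by simp [h1], ?_, Function.update s ⟨k + 1, by omega⟩ 1, ?_, ?_⟩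
      · intro x hx j hj
        rcases List.mem_cons.mp hx with rfl | hx
        · have : j ≠ ⟨k + 1, by omega⟩ := by intro h; rw [h] at hj; simp at hj
          have hk' : k < d := by omega
          simp [ev, hk', this]
        · exact h2 x hx j (by omega)
      · intro j
        by_cases hj : j = ⟨k + 1, by omega⟩
        · subst hj; simp
        · rw [Function.update_of_ne hj]; exact hs j
      · intro x hx
        rcases List.mem_cons.mp hx with rfl | hx
        · have hk' : k < d := by omega
          simp [ev, hk']
        · refine ⟨(h3 x hx).1, ?_⟩
          rw [← (h3 x hx).2]
          apply Finset.sum_congr rfl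
          intro j _
          by_cases hj : j = ⟨k + 1, by omega⟩
          · rw [h2 x hx j (by subst hj; simp)]; simp
          · rw [Function.update_of_ne hj]
    · rintro l ⟨h1, h2, s, hs, h3⟩
      refine ⟨by simp [h1], ?_, fun j => - s j, by simpa using hs, ?_⟩
      · intro x hx j hj
        obtain ⟨y, hy, rfl⟩ := List.mem_map.mp hx
        simp [h2 y hy j hj]
      · intro x hx
        obtain ⟨y, hy, rfl⟩ := List.mem_map.mp hx
        simpa using h3 y hy

lemma chains (d m : ℕ) : ∃ c : ℕ → Ch (V d), bd (c 0) = Finsupp.single [] 1 ∧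
    (∀ k < d, bd (c (k + 1)) = c k + ng (c k)) ∧
    ∀ k ≤ d, c k ∈ sup (fun l : List (V d) => l.length = k + 1 ∧ (Flat l ∧
      ∀ x ∈ l, ∀ y ∈ l, dist x y ≤ (1 - 1 / ((d + 1 : ℕ) : ℝ)) ^ m * 2)) := by
  induction m with
  | zero =>
    refine ⟨oc (ev d), bd_oc_zero _, fun k _ => bd_oc_succ _ k, fun k hk => ?_⟩
    refine sup_mono ?_ (oc_mem d k hk)
    rintro l ⟨h1, h2, s, hs, h3⟩
    refine ⟨h1, ⟨s, hs, h3⟩, ?_⟩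
    intro x hx y hy
    have := dist_le_norm_add_norm x y
    have h4 := (h3 x hx).1
    have h5 := (h3 y hy).1
    simp only [pow_zero]; linarith
  | succ m ih =>
    obtain ⟨c, h0, h1, h2⟩ := ih
    have hlen : ∀ k ≤ d, c k ∈ sup (fun l : List (V d) => l.length = k + 1) := fun k hk =>
      sup_mono (fun l hl => hl.1) (h2 k hk)
    refine ⟨fun k => S (k + 1) (c k), ?_, ?_, ?_⟩
    · show bd (S (0 + 1) (c 0)) = _
      rw [bd_S 0 (hlen 0 (by omega)), h0]; rfl
    · intro k hk
      show bd (S (k + 1 + 1) (c (k + 1))) = S (k + 1) (c k) + ng (S (k + 1) (c k))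
      rw [bd_S (k + 1) (hlen (k + 1) (by omega)), h1 k hk, map_add, S_ng]
    · intro k hk
      refine sup_map (S (k + 1)) _ ?_ (h2 k hk)
      rintro l ⟨hl, ⟨s, hs, hf⟩, hd⟩
      refine sup_mono ?_ (S_piece (d + 1) (k + 1) l hl (by omega))
      rintro u ⟨hu1, hu2, hu3⟩
      refine ⟨by omega, ⟨s, hs, hu2 _ (flat_convex s) hf⟩, ?_⟩
      have hq : (0 : ℝ) ≤ 1 - 1 / ((d + 1 : ℕ) : ℝ) := by
        rw [sub_nonneg, div_le_one (by positivity)]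
        push_cast
        have : (0 : ℝ) ≤ d := by positivity
        linarith
      have := hu3 _ (by positivity) hd
      intro x hx y hy
      rw [pow_succ']
      have := this x hx y hy
      linarith

def XX (d : ℕ) : Set (V d) := {x | ‖x‖ ≤ 1 ∧ 1 ≤ ∑ j, |x j|}

lemma XX_compact (d : ℕ) : IsCompact (XX d) := by
  refine (isCompact_closedBall (0 : V d) 1).of_isClosed_subset ?_ ?_
  · have h1 : IsClosed {x : V d | ‖x‖ ≤ 1} := isClosed_le continuous_norm continuous_const
    have h2 : IsClosed {x : V d | 1 ≤ ∑ j, |x j|} := isClosed_le continuous_const (by fun_prop)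
    exact h1.inter h2
  · intro x hx; simpa using hx.1

lemma XX_neg {d : ℕ} {x : V d} (hx : x ∈ XX d) : -x ∈ XX d := by
  simpa [XX] using hx

lemma XX_ne {d : ℕ} {x : V d} (hx : x ∈ XX d) : x ≠ 0 := by
  rintro rfl
  have := hx.2
  simp at this
  linarith

lemma Flat.mem {d : ℕ} {l : List (V d)} (h : Flat l) {x : V d} (hx : x ∈ l) : x ∈ XX d := by
  obtain ⟨s, hs, h⟩ := h
  refine ⟨(h x hx).1, ?_⟩
  rw [← (h x hx).2]
  apply Finset.sum_le_sum
  intro j _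
  calc s j * x j ≤ |s j * x j| := le_abs_self _
    _ = |s j| * |x j| := abs_mul _ _
    _ ≤ 1 * |x j| := by gcongr; exact hs j
    _ = _ := one_mul _

/-- Version for subsets of the compact set `XX`. -/
lemma main (d : ℕ) (A : Fin (d + 1) → Set (V d)) (hcl : ∀ i, IsClosed (A i))
    (hdisj : ∀ i x, x ∈ A i → -x ∉ A i)
    (hcover : ∀ x ∈ XX d, ∃ i, x ∈ A i ∨ -x ∈ A i) : ∃ x ∈ XX d, ∀ i, x ∈ A i := by
  classical
  by_contra hcon
  push Not at hcon
  have hcl' : ∀ i, IsClosed (-(A i)) := fun i => (hcl i).neg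
  obtain ⟨δ, hδ, H⟩ := lebesgue_number_lemma_of_metric (XX_compact d)
    (c := fun i => (A i)ᶜ) (fun i => (hcl i).isOpen_compl) (by
      intro x hx
      obtain ⟨i, hi⟩ := hcon x hx
      exact Set.mem_iUnion.mpr ⟨i, hi⟩)
  obtain ⟨δ', hδ', H'⟩ := lebesgue_number_lemma_of_metric (XX_compact d)
    (c := fun s : Fin (d + 1) → Bool => ⋂ i, (if s i then A i else -(A i))ᶜ) (fun s => by
      refine isOpen_iInter_of_finite fun i => ?_
      split_ifs
      · exact (hcl i).isOpen_compl
      · exact (hcl' i).isOpen_compl) (by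
      intro x hx
      refine Set.mem_iUnion.mpr ⟨fun i => decide (x ∉ A i), Set.mem_iInter.mpr fun i => ?_⟩
      by_cases h : x ∈ A i
      · simpa [h] using hdisj i x h
      · simp [h])
  have hsep : ∀ x ∈ XX d, ∀ y, dist y x < δ' → ∀ i, x ∈ A i → -y ∉ A i := by
    intro x hx y hy i hxi hyi
    obtain ⟨s, hs⟩ := H' x hx
    have h1 := Set.mem_iInter.mp (hs (Metric.mem_ball_self hδ')) i
    have h2 := Set.mem_iInter.mp (hs (Metric.mem_ball.mpr hy)) i
    cases h : s i <;> simp [h] at h1 h2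
    · exact h2 hyi
    · exact h1 hxi
  -- small mesh
  obtain ⟨m, hm⟩ : ∃ m : ℕ, (1 - 1 / ((d + 1 : ℕ) : ℝ)) ^ m * 2 < min δ δ' := by
    have hlt : (1 - 1 / ((d + 1 : ℕ) : ℝ)) < 1 := by
      have : (0 : ℝ) < 1 / ((d + 1 : ℕ) : ℝ) := by positivity
      linarith
    obtain ⟨m, hm⟩ := exists_pow_lt_of_lt_one (show 0 < min δ δ' / 2 by positivity) hlt
    exact ⟨m, by linarith⟩
  obtain ⟨c, h0, h1, h2⟩ := chains d m
  -- labels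
  let I : V d → ℕ := fun x => sInf {n | ∃ h : n < d + 1, x ∈ A ⟨n, h⟩ ∨ -x ∈ A ⟨n, h⟩}
  have hI : ∀ x ∈ XX d, ∃ h : I x < d + 1, x ∈ A ⟨I x, h⟩ ∨ -x ∈ A ⟨I x, h⟩ := by
    intro x hx
    have : I x ∈ {n | ∃ h : n < d + 1, x ∈ A ⟨n, h⟩ ∨ -x ∈ A ⟨n, h⟩} := by
      apply Nat.sInf_mem
      obtain ⟨i, hi⟩ := hcover x hx
      exact ⟨i, i.2, hi⟩
    exact this
  have hIneg : ∀ x, I (-x) = I x := by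
    intro x
    simp only [I, neg_neg]
    congr 1
    ext n
    simp only [Set.mem_ofPred_eq, or_comm]
  let pos : V d → Prop := fun x => ∃ h : I x < d + 1, x ∈ A ⟨I x, h⟩
  let lab : V d → Lab := fun x => toLex (I x, xor (decide (pos x)) (decide (I x % 2 = 1)))
  have hpos : ∀ x ∈ XX d, (pos (-x) ↔ ¬ pos x) := by
    intro x hx
    obtain ⟨h, hx'⟩ := hI x hx
    simp only [pos, hIneg]
    constructor
    · rintro ⟨h1, h2⟩ ⟨_, h4⟩
      exact hdisj _ _ h4 h2
    · intro hn
      rcases hx' with hx' | hx'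
      · exact absurd ⟨h, hx'⟩ hn
      · exact ⟨h, hx'⟩
  have hflip : ∀ x ∈ XX d, lab (-x) = flip (lab x) := by
    intro x hx
    have : decide (pos (-x)) = !decide (pos x) := by
      rw [← decide_not]; exact decide_eq_decide.mpr (hpos x hx)
    simp only [lab, flip, ix, sg, ofLex_toLex, hIneg, this, Bool.not_xor]
  obtain ⟨l, ⟨hflat, hmesh⟩, b, hl⟩ := fan d lab c _ h0 h1 h2
    (fun l hl x hx => (hI x (hl.1.mem hx)).1)
    (fun l hl x hx => hflip x (hl.1.mem hx))
    (by
      intro l hl x hx y hy heq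
      have hxX := hl.1.mem hx
      have hyX := hl.1.mem hy
      have hxy := hl.2 x hx y hy
      have hlt : dist x y < δ' := by
        have := min_le_right δ δ'
        linarith
      rw [← hflip y hyX] at heq
      have e : (I x, xor (decide (pos x)) (decide (I x % 2 = 1))) =
        (I (-y), xor (decide (pos (-y))) (decide (I (-y) % 2 = 1))) := heq
      rw [Prod.mk.injEq] at e
      obtain ⟨e1, e2⟩ := e
      have e5 : decide (I x % 2 = 1) = decide (I (-y) % 2 = 1) := by simp only [e1]
      rw [e5] at e2
      have e3 : pos x ↔ pos (-y) := by
        have := Bool.xor_left_inj.mp e2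
        exact decide_eq_decide.mp this
      by_cases hp : pos x
      · obtain ⟨h, hxA⟩ := hp
        obtain ⟨h', hyA⟩ := e3.mp ⟨h, hxA⟩
        have e4 : (⟨I (-y), h'⟩ : Fin (d + 1)) = ⟨I x, h⟩ := Fin.ext e1.symm
        rw [e4] at hyA
        exact hsep x hxX y (by rwa [dist_comm]) _ hxA hyA
      · have hy' : pos y := by
          by_contra hn
          exact hp (e3.mpr ((hpos y hyX).mpr hn))
        have hx' : pos (-x) := (hpos x hxX).mpr hp
        obtain ⟨h, hxA⟩ := hx'
        obtain ⟨h', hyA⟩ := hy'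
        have e4 : (⟨I (-x), h⟩ : Fin (d + 1)) = ⟨I y, h'⟩ :=
          Fin.ext (by simp only [hIneg] at e1 ⊢; exact e1)
        rw [e4] at hxA
        exact hsep y hyX x hlt _ hyA hxA)
  have hl' : ∀ i : Fin (d + 1), ∃ x ∈ l, if b then x ∈ A i else -x ∈ A i := by
    intro i
    obtain ⟨x, hx, hxl⟩ := hl i i.2
    refine ⟨x, hx, ?_⟩
    have e : (I x, xor (decide (pos x)) (decide (I x % 2 = 1))) =
      ((i : ℕ), xor b (decide ((i : ℕ) % 2 = 1))) := hxl
    rw [Prod.mk.injEq] at e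
    obtain ⟨e1, e2⟩ := e
    have e5 : decide (I x % 2 = 1) = decide ((i : ℕ) % 2 = 1) := by simp only [e1]
    rw [e5] at e2
    have e3 := Bool.xor_left_inj.mp e2
    obtain ⟨h, hxA⟩ := hI x (hflat.mem hx)
    have e4 : (⟨I x, h⟩ : Fin (d + 1)) = i := Fin.ext e1
    cases b with
    | true =>
      obtain ⟨h', hp⟩ : pos x := by simpa using e3
      rw [e4] at hp
      simpa using hp
    | false =>
      have hp : ¬ pos x := by simpa using e3
      rcases hxA with hxA | hxA
      · exact absurd ⟨h, hxA⟩ hp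
      · rw [e4] at hxA; simpa using hxA
  obtain ⟨x0, hx0, -⟩ := hl' 0
  have hlt : ∀ x ∈ l, dist x x0 < δ := by
    intro x hx
    have := hmesh x hx x0 hx0
    have := min_le_left δ δ'
    linarith
  cases b with
  | true =>
    obtain ⟨i, hi⟩ := H x0 (hflat.mem hx0)
    obtain ⟨x, hx, hxA⟩ := hl' i
    exact hi (Metric.mem_ball.mpr (hlt x hx)) (by simpa using hxA)
  | false =>
    obtain ⟨i, hi⟩ := H (-x0) (XX_neg (hflat.mem hx0))
    obtain ⟨x, hx, hxA⟩ := hl' i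
    refine hi (Metric.mem_ball.mpr ?_) (show -x ∈ A i by simpa using hxA)
    rw [dist_neg_neg]; exact hlt x hx

end geometry

end

end FanProof

/-- For closed sets `A₁,…,A_{d+1} ⊆ S^d` with `A_i ∩ (-A_i) = ∅` that together with their
antipodes cover `S^d`, the intersection `⋂ A_i` is nonempty. -/
theorem stmt3 (d : ℕ)
    (A : Fin (d + 1) → Set (EuclideanSpace ℝ (Fin (d + 1))))
    (hclosed : ∀ i, IsClosed (A i))
    (hsub : ∀ i, A i ⊆ Metric.sphere (0 : EuclideanSpace ℝ (Fin (d + 1))) 1)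
    (hdisj : ∀ i, A i ∩ (-A i) = ∅)
    (hcover : Metric.sphere (0 : EuclideanSpace ℝ (Fin (d + 1))) 1 ⊆ ⋃ i, (A i ∪ -A i)) :
    (⋂ i, A i).Nonempty := by
  obtain ⟨x, -, hx⟩ := FanProof.main d
    (fun i => FanProof.XX d ∩ (fun x => ‖x‖⁻¹ • x) ⁻¹' (A i)) (by
      intro i
      refine ContinuousOn.preimage_isClosed_of_isClosed ?_ (FanProof.XX_compact d).isClosed
        (hclosed i)
      refine ContinuousOn.smul (ContinuousOn.inv₀ continuous_norm.continuousOn ?_) continuousOn_id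
      intro x hx
      exact norm_ne_zero_iff.mpr (FanProof.XX_ne hx)) (by
      rintro i x ⟨_, h1⟩ ⟨_, h2⟩
      simp only [Set.mem_preimage, norm_neg, smul_neg] at h1 h2
      have : ‖x‖⁻¹ • x ∈ A i ∩ (-A i) := ⟨h1, h2⟩
      rw [hdisj i] at this
      exact this) (by
      intro x hx
      have hn : ‖x‖ ≠ 0 := norm_ne_zero_iff.mpr (FanProof.XX_ne hx)
      have hs : ‖x‖⁻¹ • x ∈ Metric.sphere (0 : EuclideanSpace ℝ (Fin (d + 1))) 1 := by
        simp [norm_smul, hn]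
      obtain ⟨i, hi⟩ := Set.mem_iUnion.mp (hcover hs)
      refine ⟨i, ?_⟩
      rcases hi with hi | hi
      · exact Or.inl ⟨hx, hi⟩
      · refine Or.inr ⟨FanProof.XX_neg hx, ?_⟩
        simp only [Set.mem_preimage, norm_neg, smul_neg]
        exact hi)
  exact ⟨‖x‖⁻¹ • x, Set.mem_iInter.mpr fun i => (hx i).2⟩
end
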